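/- For every n ≥ 0, d ≥ 0, and k, there exists a finitely generated graded Cohen-Macaulay module M over R = C[x_0,...,x_n] with pure resolution of degree sequence (k, k+1, ..., k+n, k+n+1+d) and with β_0(M) = binom(n+d, n) minimal generators. -/

import Mathlib

/-!
# Pure modules with degree sequence `(k, k+1, …, k+n, k+n+1+d)`

Let `S = ℂ[X_0, …, X_n]` and `V = S ⊗ ℂ[y_0, …, y_n] ⊗ Λ(ℂ^{n+1})`, bigraded by the degree in `y`
and the exterior degree.  With `ι_i` the contraction and `∂_i` the derivative in `y_i`, consider

* the Koszul differential `dx = ∑ X_i ι_i`,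
* the operator `dq = ∑ ∂_i ι_i`, which anticommutes with `dx`,
* multiplication by `Th = ∑ X_i y_i`.

For `p ≤ n` let `K d p` be the kernel of `dq` on the part of `y`-degree `d` and exterior degree `p`,
and let `K d (n + 1)` be the part of `y`-degree `0` and exterior degree `n + 1`.  These are free
`S`-modules, namely `S ⊗ Zsp n d p` for a finite-dimensional space `Zsp n d p`.  The differential is
`dx : K d (p + 1) → K d p` for `p < n` and `Th ^ d ∘ dx : K d (n + 1) → K d n`; so it is linear in
`X` except for the last map, which has degree `d + 1`.  Moreover `K d 0` is the space of forms of
degree `d` in `y`, of dimension `(n + d).choose n`.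

*Exactness* (`Ops.exact_mid`, `Ops.exact_top`, `Ops.inj_top`).  A cycle `u ∈ K d (p + 1)` is
`dx w` for some `w`, by the exactness of the Koszul complex, but `dq w` need not vanish.  It is a
`dx`-cycle of lower `y`-degree killed by `dq`, so by induction on `d` it is `dx` of an element of
`ker dq`.  That element is `dq v`, as `dq` is exact in characteristic zero, and `w + dx v` is the
desired preimage.  In top exterior degree the `dq`-exactness fails, `ker dq` is the part of
`y`-degree `0`, and the induction produces `w = Th ^ d v` instead.

*Cohen–Macaulayness*.  Started from `X_i ^ (d + 1) • u` with `u ∈ K d 0`, the same induction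
shows that `X_i ^ (d + 1)` annihilates the cokernel (`Ops.D_ann`).  Since the `X_i ^ (d + 1)` form
a regular sequence of length `n + 1`, the vanishing of `Ext^i(M, S)` for `i ≤ n` follows by the
usual induction along the sequence (`dual_exact_of_regular`), where the long exact sequence of
`Ext` is replaced by explicit null-homotopies of multiplication by `X_i ^ (d + 1)`.
-/

open MvPolynomial DirectSum

noncomputable section

/-- The standard graded polynomial ring `ℂ[x_1,…,x_m]`. -/
abbrev PolyS (m : ℕ) : Type := MvPolynomial (Fin m) ℂ

/-- The degree-`e` homogeneous piece of the polynomial ring (zero for `e < 0`). -/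
def hpiece (m : ℕ) (e : ℤ) : Submodule ℂ (PolyS m) :=
  if 0 ≤ e then homogeneousSubmodule (Fin m) ℂ e.toNat else ⊥

/-- The graded free module `⊕_j S(-j)^{b j}`. -/
abbrev FreeMod (m : ℕ) (b : ℤ → ℕ) : Type :=
  DirectSum ℤ (fun j : ℤ => Fin (b j) → PolyS m)

/-- The degree-`deg` homogeneous piece of the graded free module `⊕_j S(-j)^{b j}`. -/
def freePiece (m : ℕ) (b : ℤ → ℕ) (deg : ℤ) : Submodule ℂ (FreeMod m b) where
  carrier := {x | ∀ (j : ℤ) (i : Fin (b j)), x j i ∈ hpiece m (deg - j)}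
  add_mem' := by
    intro x y hx hy j i
    simp only [DirectSum.add_apply, Pi.add_apply]
    exact add_mem (hx j i) (hy j i)
  zero_mem' := by
    intro j i
    simp only [DirectSum.zero_apply, Pi.zero_apply]
    exact zero_mem _
  smul_mem' := by
    intro c x hx j i
    simp only [DirectSum.smul_apply, Pi.smul_apply]
    exact Submodule.smul_mem _ c (hx j i)

/-- The irrelevant maximal ideal `(x_1,…,x_m)`. -/
def mIdeal (m : ℕ) : Ideal (PolyS m) := Ideal.span (Set.range (X : Fin m → PolyS m))

/-- A (ℤ-)grading on an `S`-module, compatible with the standard grading of `S`. -/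
structure GradedSMod (m : ℕ) (M : Type) [AddCommGroup M] [Module ℂ M]
    [Module (PolyS m) M] [IsScalarTower ℂ (PolyS m) M] where
  piece : ℤ → Submodule ℂ M
  internal : DirectSum.IsInternal piece
  smul_mem : ∀ (d : ℕ) (p : PolyS m), p ∈ homogeneousSubmodule (Fin m) ℂ d →
    ∀ (j : ℤ) (x : M), x ∈ piece j → p • x ∈ piece (d + j)

/-- A minimal graded free resolution of a graded module `M`, recorded together with
its graded Betti numbers `b i j`. -/
structure MinFreeRes (m : ℕ) (M : Type) [AddCommGroup M] [Module ℂ M]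
    [Module (PolyS m) M] [IsScalarTower ℂ (PolyS m) M] (gM : GradedSMod m M) where
  b : ℕ → ℤ → ℕ
  bfin : ∀ i, (Function.support (b i)).Finite
  diff : ∀ i : ℕ, FreeMod m (b (i + 1)) →ₗ[PolyS m] FreeMod m (b i)
  aug : FreeMod m (b 0) →ₗ[PolyS m] M
  aug_surjective : Function.Surjective aug
  exact_aug : LinearMap.ker aug = LinearMap.range (diff 0)
  exact : ∀ i, LinearMap.ker (diff i) = LinearMap.range (diff (i + 1))
  graded_diff : ∀ (i : ℕ) (deg : ℤ) (x : FreeMod m (b (i + 1))),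
    x ∈ freePiece m (b (i + 1)) deg → diff i x ∈ freePiece m (b i) deg
  graded_aug : ∀ (deg : ℤ) (x : FreeMod m (b 0)),
    x ∈ freePiece m (b 0) deg → aug x ∈ gM.piece deg
  minimal : ∀ (i : ℕ) (x : FreeMod m (b (i + 1))),
    diff i x ∈ (mIdeal m) • (⊤ : Submodule (PolyS m) (FreeMod m (b i)))

/-- `tmax c` : the largest degree `j` with `c j ≠ 0` (the `i`-th entry of the maximal
degree sequence, when `c = b i`). -/
def tmax (c : ℤ → ℕ) : ℤ := sSup {j | c j ≠ 0}

/-- The Castelnuovo–Mumford regularity read off from a Betti table. -/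
def regOf (b : ℕ → ℤ → ℕ) : ℤ := sSup {z | ∃ i j, b i j ≠ 0 ∧ z = j - (i : ℤ)}


/-- The grading on (the underlying module of) a homogeneous ideal `J` induced from the
standard grading of the polynomial ring. -/
def NatIdealGrading (m : ℕ) (J : Ideal (PolyS m)) (g : GradedSMod m ↥J) : Prop :=
  ∀ (j : ℤ) (x : ↥J), x ∈ g.piece j ↔ (x : PolyS m) ∈ hpiece m j

/-- The ideal `I = (y_1,…,y_N)` inside `S = ℂ[x_0,…,x_n,y_1,…,y_N]`, where the last `N`
variables are the `y`'s. -/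
def yIdeal (n N : ℕ) : Ideal (PolyS (n + 1 + N)) :=
  Ideal.span {p | ∃ i : Fin (n + 1 + N), n + 1 ≤ (i : ℕ) ∧ p = X i}

/-- Cohen–Macaulayness of a module with minimal free resolution `F` of length `r`,
expressed through the standard characterization: `Ext^i(M, S) = 0` for `i < r = pd M`,
i.e. the dual of the minimal free resolution is exact except at the last spot. -/
def IsCMres (m : ℕ) {M : Type} [AddCommGroup M] [Module ℂ M]
    [Module (PolyS m) M] [IsScalarTower ℂ (PolyS m) M] {gM : GradedSMod m M}
    (F : MinFreeRes m M gM) (r : ℕ) : Prop :=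
  (0 < r → LinearMap.ker (F.diff 0).dualMap = ⊥) ∧
  ∀ i, i + 1 < r →
    LinearMap.ker ((F.diff (i + 1)).dualMap) = LinearMap.range ((F.diff i).dualMap)

/-- A bundled graded module over `ℂ[x_1,…,x_m]`. -/
structure GradedModuleBundle (m : ℕ) where
  carrier : Type
  [isAddCommGroup : AddCommGroup carrier]
  [isModC : Module ℂ carrier]
  [isModS : Module (PolyS m) carrier]
  [isTower : IsScalarTower ℂ (PolyS m) carrier]
  grading : GradedSMod m carrier

attribute [instance] GradedModuleBundle.isAddCommGroup GradedModuleBundle.isModC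
  GradedModuleBundle.isModS GradedModuleBundle.isTower

set_option linter.unusedSectionVars false

/-! ### Operators and commutation rules -/

section Operators

/-- The operators on `V = S ⊗ ℂ[y] ⊗ Λ` that the argument uses, with their commutation rules:
multiplication by `y i`, the derivative `q i` in the variable `y i`, the contraction `io i` and the
exterior multiplication `ep i`.  The remaining fields say that the Euler operator `∑ y i ∘ q i` and
the exterior degree operator `∑ ep i ∘ io i` have no eigenvalue `-1`, that the exterior degree is
at most `m`, that `V` has no `X i`-torsion, and that the Koszul complex is exact in positive
exterior degree, compatibly with the `y`-grading. -/
structure Ops (m : ℕ) (V : Type) [AddCommGroup V] [Module ℂ V] [Module (PolyS m) V] where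
  y : Fin m → V →ₗ[PolyS m] V
  q : Fin m → V →ₗ[PolyS m] V
  io : Fin m → V →ₗ[PolyS m] V
  ep : Fin m → V →ₗ[PolyS m] V
  y_y : ∀ i j v, y i (y j v) = y j (y i v)
  q_q : ∀ i j v, q i (q j v) = q j (q i v)
  q_y : ∀ i j v, q i (y j v) = (if i = j then v else 0) + y j (q i v)
  io_y : ∀ i j v, io i (y j v) = y j (io i v)
  io_q : ∀ i j v, io i (q j v) = q j (io i v)
  ep_y : ∀ i j v, ep i (y j v) = y j (ep i v)
  ep_q : ∀ i j v, ep i (q j v) = q j (ep i v)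
  io_io : ∀ i j v, io i (io j v) = - io j (io i v)
  ep_ep : ∀ i j v, ep i (ep j v) = - ep j (ep i v)
  io_ep : ∀ i j v, io i (ep j v) = (if i = j then v else 0) - ep j (io i v)
  ny_pos : ∀ v, ∑ i, y i (q i v) + v = 0 → v = 0
  ne_pos : ∀ v, ∑ i, ep i (io i v) + v = 0 → v = 0
  ne_le : ∀ k v, m < k → ∑ i, ep i (io i v) = k • v → v = 0
  x_inj : ∀ i (v : V), (X i : PolyS m) • v = 0 → v = 0
  koszul : ∀ (p : ℕ) (v : V), 0 < p → ∑ i, (X i : PolyS m) • io i v = 0 →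
    ∑ i, ep i (io i v) = p • v → ∃ w, ∑ i, (X i : PolyS m) • io i w = v ∧
      ∑ i, ep i (io i w) = (p + 1) • w ∧
      ∀ c : ℕ, ∑ i, y i (q i v) = c • v → ∑ i, y i (q i w) = c • w

namespace Ops

variable {m : ℕ} {V : Type} [AddCommGroup V] [Module ℂ V] [Module (PolyS m) V]
  [IsScalarTower ℂ (PolyS m) V] (O : Ops m V)

/-- The Euler operator of the `y`-variables; its `c`-eigenspace is the part of `y`-degree `c`. -/
def NY : V →ₗ[PolyS m] V := ∑ i, O.y i ∘ₗ O.q i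
/-- The operator whose `p`-eigenspace is the part of exterior degree `p`. -/
def NE : V →ₗ[PolyS m] V := ∑ i, O.ep i ∘ₗ O.io i
/-- The Koszul differential `∑ X_i ι_i`. -/
def dx : V →ₗ[PolyS m] V := ∑ i, (X i : PolyS m) • O.io i
/-- The operator `∑ ∂_i ι_i`, lowering both the `y`-degree and the exterior degree by one. -/
def dq : V →ₗ[PolyS m] V := ∑ i, O.q i ∘ₗ O.io i
/-- The operator `∑ y_i ε_i`, a contracting homotopy of `dq` up to scalars; see `Ops.dq_yw`. -/
def yw : V →ₗ[PolyS m] V := ∑ i, O.y i ∘ₗ O.ep i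
/-- Multiplication by `∑ X_i y_i`. -/
def Th : V →ₗ[PolyS m] V := ∑ i, (X i : PolyS m) • O.y i

lemma NY_apply (v : V) : O.NY v = ∑ i, O.y i (O.q i v) := by simp [NY]
lemma NE_apply (v : V) : O.NE v = ∑ i, O.ep i (O.io i v) := by simp [NE]
lemma dx_apply (v : V) : O.dx v = ∑ i, (X i : PolyS m) • O.io i v := by simp [dx]
lemma dq_apply (v : V) : O.dq v = ∑ i, O.q i (O.io i v) := by simp [dq]
lemma yw_apply (v : V) : O.yw v = ∑ i, O.y i (O.ep i v) := by simp [yw]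
lemma Th_apply (v : V) : O.Th v = ∑ i, (X i : PolyS m) • O.y i v := by simp [Th]

lemma NY_q (i : Fin m) (v : V) : O.NY (O.q i v) = O.q i (O.NY v) - O.q i v := by
  simp only [NY_apply, map_sum, O.q_y, Finset.sum_add_distrib]
  simp [O.q_q i]

lemma NY_y (i : Fin m) (v : V) : O.NY (O.y i v) = O.y i (O.NY v) + O.y i v := by
  have : ∀ j, O.y j (O.q j (O.y i v)) = (if j = i then O.y i v else 0) + O.y i (O.y j (O.q j v)) := by
    intro j
    rw [O.q_y, map_add, O.y_y j i]
    split_ifs with h <;> simp [h]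
  simp only [NY_apply, map_sum, this, Finset.sum_add_distrib]
  simp [add_comm]

lemma NY_io (i : Fin m) (v : V) : O.NY (O.io i v) = O.io i (O.NY v) := by
  simp only [NY_apply, map_sum, O.io_y, O.io_q]

lemma NY_ep (i : Fin m) (v : V) : O.NY (O.ep i v) = O.ep i (O.NY v) := by
  simp only [NY_apply, map_sum, O.ep_y, O.ep_q]

lemma NE_q (i : Fin m) (v : V) : O.NE (O.q i v) = O.q i (O.NE v) := by
  simp only [NE_apply, map_sum, O.io_q, O.ep_q]

lemma NE_y (i : Fin m) (v : V) : O.NE (O.y i v) = O.y i (O.NE v) := by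
  simp only [NE_apply, map_sum, O.io_y, O.ep_y]

lemma NE_io (i : Fin m) (v : V) : O.NE (O.io i v) = O.io i (O.NE v) - O.io i v := by
  have : ∀ j, O.ep j (O.io j (O.io i v)) = O.io i (O.ep j (O.io j v)) - (if i = j then O.io j v else 0) := by
    intro j
    rw [O.io_ep, O.io_io j i, map_neg]
    abel
  simp only [NE_apply, map_sum, this, Finset.sum_sub_distrib]
  simp

lemma NE_ep (i : Fin m) (v : V) : O.NE (O.ep i v) = O.ep i (O.NE v) + O.ep i v := by
  have : ∀ j, O.ep j (O.io j (O.ep i v)) = (if j = i then O.ep j v else 0) + O.ep i (O.ep j (O.io j v)) := by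
    intro j
    rw [O.io_ep, map_sub, O.ep_ep j i]
    split_ifs with h <;> simp
  simp only [NE_apply, map_sum, this, Finset.sum_add_distrib]
  simp [add_comm]

lemma NY_dx (v : V) : O.NY (O.dx v) = O.dx (O.NY v) := by
  simp only [dx_apply, map_sum, map_smul, NY_io]

lemma NE_dx (v : V) : O.NE (O.dx v) = O.dx (O.NE v) - O.dx v := by
  simp only [dx_apply, map_sum, map_smul, NE_io, smul_sub, Finset.sum_sub_distrib]

lemma NY_dq (v : V) : O.NY (O.dq v) = O.dq (O.NY v) - O.dq v := by
  simp only [dq_apply, map_sum, NY_q, NY_io, Finset.sum_sub_distrib]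

lemma NE_dq (v : V) : O.NE (O.dq v) = O.dq (O.NE v) - O.dq v := by
  simp only [dq_apply, map_sum, NE_q, NE_io, map_sub, Finset.sum_sub_distrib]

lemma NY_yw (v : V) : O.NY (O.yw v) = O.yw (O.NY v) + O.yw v := by
  simp only [yw_apply, map_sum, NY_y, NY_ep, Finset.sum_add_distrib]

lemma NE_yw (v : V) : O.NE (O.yw v) = O.yw (O.NE v) + O.yw v := by
  simp only [yw_apply, map_sum, NE_y, NE_ep, map_add, Finset.sum_add_distrib]

lemma NY_Th (v : V) : O.NY (O.Th v) = O.Th (O.NY v) + O.Th v := by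
  simp only [Th_apply, map_sum, map_smul, NY_y, smul_add, Finset.sum_add_distrib]

lemma NE_Th (v : V) : O.NE (O.Th v) = O.Th (O.NE v) := by
  simp only [Th_apply, map_sum, map_smul, NE_y]

lemma dx_Th (v : V) : O.dx (O.Th v) = O.Th (O.dx v) := by
  simp only [Th_apply, dx_apply, map_sum, map_smul, O.io_y, Finset.smul_sum]
  rw [Finset.sum_comm]
  exact Finset.sum_congr rfl fun i _ => Finset.sum_congr rfl fun j _ => smul_comm _ _ _

lemma dq_Th (v : V) : O.dq (O.Th v) = O.Th (O.dq v) + O.dx v := by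
  simp only [Th_apply, dx_apply, dq_apply, map_sum, map_smul, O.io_y, O.q_y, Finset.smul_sum,
    smul_add, Finset.sum_add_distrib]
  rw [add_comm, Finset.sum_comm]
  congr 1
  simp

lemma q_Th (i : Fin m) (v : V) : O.q i (O.Th v) = O.Th (O.q i v) + (X i : PolyS m) • v := by
  simp only [Th_apply, map_sum, map_smul, O.q_y, smul_add, Finset.sum_add_distrib]
  rw [add_comm]
  congr 1
  simp

lemma neg_self {v : V} (h : v = -v) : v = 0 := by
  have h2 : (2 : ℂ) • v = 0 := by rw [two_smul]; nth_rewrite 1 [h]; simp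
  exact (smul_eq_zero.mp h2).resolve_left two_ne_zero

lemma dx_dx (v : V) : O.dx (O.dx v) = 0 := by
  apply neg_self
  simp only [dx_apply, map_sum, map_smul, Finset.smul_sum, ← Finset.sum_neg_distrib]
  rw [Finset.sum_comm]
  refine Finset.sum_congr rfl fun i _ => Finset.sum_congr rfl fun j _ => ?_
  rw [O.io_io j i, smul_neg, smul_neg, smul_comm, neg_neg]

lemma dq_dq (v : V) : O.dq (O.dq v) = 0 := by
  apply neg_self
  simp only [dq_apply, map_sum, ← Finset.sum_neg_distrib]
  rw [Finset.sum_comm]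
  refine Finset.sum_congr rfl fun i _ => Finset.sum_congr rfl fun j _ => ?_
  rw [O.io_q, O.io_q, O.io_io j i, map_neg, map_neg, O.q_q, neg_neg]

lemma dq_dx (v : V) : O.dq (O.dx v) = - O.dx (O.dq v) := by
  simp only [dq_apply, dx_apply, map_sum, map_smul, Finset.smul_sum, ← Finset.sum_neg_distrib]
  rw [Finset.sum_comm]
  refine Finset.sum_congr rfl fun i _ => Finset.sum_congr rfl fun j _ => ?_
  rw [O.io_q, O.io_io j i, map_neg, smul_neg, neg_neg]

lemma q_dx (i : Fin m) (v : V) : O.q i (O.dx v) = O.dx (O.q i v) := by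
  simp only [dx_apply, map_sum, map_smul, O.io_q]

/-- Cartan-type formula: on the part of `y`-degree `a` and exterior degree `p`, the anticommutator
of `dq` and `yw` is multiplication by `a + m - p`. -/
lemma dq_yw (v : V) : O.dq (O.yw v) + O.yw (O.dq v) + O.NE v = O.NY v + m • v := by
  have h : ∀ i j, O.q i (O.io i (O.y j (O.ep j v))) + O.y j (O.ep j (O.q i (O.io i v)))
      + (if i = j then O.ep j (O.io i v) else 0) = if i = j then (v + O.y j (O.q i v)) else 0 := by
    intro i j
    rw [O.io_y, O.q_y, O.io_ep, O.ep_q]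
    split_ifs with hh
    · simp only [map_sub]
      abel
    · simp
  have h2 : O.dq (O.yw v) + O.yw (O.dq v) + O.NE v = ∑ i, ∑ j,
      (O.q i (O.io i (O.y j (O.ep j v))) + O.y j (O.ep j (O.q i (O.io i v)))
      + (if i = j then O.ep j (O.io i v) else 0)) := by
    simp only [Finset.sum_add_distrib]
    simp only [dq_apply, yw_apply, NE_apply, map_sum]
    congr 1
    · congr 1
      rw [Finset.sum_comm]
    · simp
  rw [h2]
  simp only [h]
  simp [NY_apply, Finset.sum_add_distrib, add_comm]

end Ops

end Operators

/-! ### Exactness of the kernel complex -/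

section KernelComplex

namespace Ops

variable {m : ℕ} {V : Type} [AddCommGroup V] [Module ℂ V] [Module (PolyS m) V]
  [IsScalarTower ℂ (PolyS m) V] (O : Ops m V)

lemma eq_zero_of_NY_neg {v : V} (h : O.NY v = -v) : v = 0 := by
  apply O.ny_pos
  rw [← NY_apply, h, neg_add_cancel]

lemma eq_zero_of_NE_neg {v : V} (h : O.NE v = -v) : v = 0 := by
  apply O.ne_pos
  rw [← NE_apply, h, neg_add_cancel]

lemma q_eq_zero {v : V} (h : O.NY v = 0) (i : Fin m) : O.q i v = 0 := by
  apply O.eq_zero_of_NY_neg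
  rw [NY_q, h, map_zero, zero_sub]

lemma io_eq_zero {v : V} (h : O.NE v = 0) (i : Fin m) : O.io i v = 0 := by
  apply O.eq_zero_of_NE_neg
  rw [NE_io, h, map_zero, zero_sub]

lemma dq_eq_zero {v : V} (h : O.NY v = 0) : O.dq v = 0 := by
  apply O.eq_zero_of_NY_neg
  rw [NY_dq, h, map_zero, zero_sub]

lemma yw_eq_zero {v : V} (h : O.NE v = m • v) : O.yw v = 0 := by
  apply O.ne_le (m + 1) _ (Nat.lt_succ_self m)
  rw [← NE_apply, NE_yw, h, map_nsmul, add_smul, one_smul]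

lemma nsmul_inj {k : ℕ} (hk : k ≠ 0) {v : V} (h : k • v = 0) : v = 0 := by
  have h2 : (k : ℂ) • v = 0 := by rw [Nat.cast_smul_eq_nsmul, h]
  exact (smul_eq_zero.mp h2).resolve_left (Nat.cast_ne_zero.mpr hk)

lemma exists_div {k : ℕ} (hk : k ≠ 0) (v : V) : ∃ w : V, v = k • w := by
  refine ⟨(k : ℂ)⁻¹ • v, ?_⟩
  rw [← Nat.cast_smul_eq_nsmul ℂ, smul_smul, mul_inv_cancel₀ (Nat.cast_ne_zero.mpr hk), one_smul]

/-- Below the top exterior degree, every `dq`-cycle is a `dq`-boundary. -/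
lemma dq_exact {d p : ℕ} (hp : p + 1 ≤ m) {v : V} (hY : O.NY v = d • v) (hE : O.NE v = p • v)
    (hv : O.dq v = 0) : ∃ w, O.dq w = v ∧ O.NY w = (d + 1) • w ∧ O.NE w = (p + 1) • w := by
  obtain ⟨e, rfl⟩ : ∃ e, m = p + (e + 1) := ⟨m - p - 1, by omega⟩
  have hk : d + (e + 1) ≠ 0 := by omega
  obtain ⟨u, rfl⟩ := exists_div hk v
  have key := O.dq_yw u
  rw [map_nsmul] at hY hE hv
  have hY' : O.NY u = d • u := by
    have : (d + (e + 1)) • (O.NY u - d • u) = 0 := by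
      rw [smul_sub, hY, smul_comm, sub_self]
    exact sub_eq_zero.mp (nsmul_inj hk this)
  have hE' : O.NE u = p • u := by
    have : (d + (e + 1)) • (O.NE u - p • u) = 0 := by
      rw [smul_sub, hE, smul_comm, sub_self]
    exact sub_eq_zero.mp (nsmul_inj hk this)
  have hq' := nsmul_inj hk hv
  refine ⟨O.yw u, ?_, ?_, ?_⟩
  · rw [hq', hE', hY', map_zero, add_zero] at key
    have : O.dq (O.yw u) = d • u + (p + (e + 1)) • u - p • u := by rw [← key]; abel
    rw [this, add_smul p, add_smul d]; abel
  · rw [NY_yw, hY', map_nsmul, add_smul, one_smul]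
  · rw [NE_yw, hE', map_nsmul, add_smul, one_smul]

/-- The elements from which the inductive construction of preimages can start: those of positive
exterior degree, and in exterior degree `0` the multiples of some `X_i ^ (d + 1)`. -/
def Good (p d : ℕ) (u : V) : Prop :=
  0 < p ∨ p = 0 ∧ ∃ i v, O.NY v = d • v ∧ O.NE v = 0 ∧ u = (X i : PolyS m) ^ (d + 1) • v

/-- A good `dx`-cycle lifts along the Koszul differential, and `dq` of the lift is again good, for
the next lower `y`-degree.  In exterior degree `0` the lift of `X_i ^ (d + 1) v` is
`X_i ^ d ε_i v`, whose image under `dq` is `X_i ^ d ∂_i v`. -/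
lemma dx_lift {p d : ℕ} {u : V} (hG : O.Good p d u) (hY : O.NY u = d • u) (hE : O.NE u = p • u)
    (hx : O.dx u = 0) : ∃ w, O.dx w = u ∧ O.NY w = d • w ∧ O.NE w = (p + 1) • w ∧
      ∀ d', d = d' + 1 → O.Good p d' (O.dq w) := by
  rcases hG with hp | ⟨rfl, i, v, hvY, hvE, rfl⟩
  · rw [NE_apply] at hE
    rw [NY_apply] at hY
    rw [dx_apply] at hx
    obtain ⟨w, h1, h2, h3⟩ := O.koszul p u hp hx hE
    refine ⟨w, by rw [dx_apply, h1], by rw [NY_apply, h3 d hY], by rw [NE_apply, h2], ?_⟩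
    exact fun _ _ => Or.inl hp
  · have hio := O.io_eq_zero hvE
    refine ⟨(X i : PolyS m) ^ d • O.ep i v, ?_, ?_, ?_, ?_⟩
    · rw [map_smul, dx_apply]
      simp only [O.io_ep, hio, map_zero, sub_zero]
      simp [smul_smul, pow_succ]
    · rw [map_smul, NY_ep, hvY, map_nsmul, smul_comm]
    · rw [map_smul, NE_ep, hvE]
      simp
    · rintro d' rfl
      refine Or.inr ⟨rfl, i, O.q i v, ?_, ?_, ?_⟩
      · rw [NY_q, hvY, map_nsmul, add_smul, one_smul, add_sub_cancel_right]
      · rw [NE_q, hvE, map_zero]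
      · rw [map_smul, dq_apply]
        simp only [O.io_ep, hio, map_zero, sub_zero]
        congr 1
        rw [Finset.sum_eq_single i] <;> simp +contextual

/-- Lifting of `dx`-cycles within `ker dq`, below the top exterior degree. -/
theorem exact_mid {p : ℕ} (hp : p + 2 ≤ m) (d : ℕ) : ∀ (u : V), O.Good p d u → O.NY u = d • u →
    O.NE u = p • u → O.dx u = 0 → O.dq u = 0 →
    ∃ w, O.dx w = u ∧ O.NY w = d • w ∧ O.NE w = (p + 1) • w ∧ O.dq w = 0 := by
  induction d with
  | zero =>
    intro u hG hY hE hx _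
    obtain ⟨w, h1, h2, h3, -⟩ := O.dx_lift hG hY hE hx
    exact ⟨w, h1, h2, h3, O.dq_eq_zero (by simpa using h2)⟩
  | succ d ih =>
    intro u hG hY hE hx hq
    obtain ⟨w, h1, h2, h3, h4⟩ := O.dx_lift hG hY hE hx
    obtain ⟨w1, g1, g2, g3, g4⟩ := ih (O.dq w) (h4 d rfl)
      (by rw [NY_dq, h2, map_nsmul, add_smul, one_smul, add_sub_cancel_right])
      (by rw [NE_dq, h3, map_nsmul, add_smul, one_smul, add_sub_cancel_right])
      (by rw [← neg_eq_zero, ← dq_dx, h1, hq]) (O.dq_dq w)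
    obtain ⟨v, k1, k2, k3⟩ := O.dq_exact (by omega) g2 g3 g4
    -- Here `dq w = dx w1 = dx (dq v) = - dq (dx v)`, so `w + dx v` is killed by `dq`.
    refine ⟨w + O.dx v, ?_, ?_, ?_, ?_⟩
    · rw [map_add, dx_dx, h1, add_zero]
    · rw [map_add, NY_dx, k2, h2, map_nsmul, smul_add]
    · rw [map_add, NE_dx, k3, h3, map_nsmul, smul_add, add_smul (p + 1) 1, one_smul,
        add_sub_cancel_right]
    · rw [map_add, dq_dx, k1, g1, add_neg_cancel]

lemma dq_Th_pow (k : ℕ) (v : V) : O.dq ((O.Th ^ (k + 1)) v) =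
    (O.Th ^ (k + 1)) (O.dq v) + (k + 1) • (O.Th ^ k) (O.dx v) := by
  induction k with
  | zero => simp [dq_Th]
  | succ k ih =>
    have hc : ∀ j w, O.dx ((O.Th ^ j) w) = (O.Th ^ j) (O.dx w) := by
      intro j
      induction j with
      | zero => simp
      | succ j ihj => intro w; rw [pow_succ', Module.End.mul_apply, dx_Th, ihj, Module.End.mul_apply]
    have hs : ∀ w, O.Th ((O.Th ^ k) w) = (O.Th ^ (k + 1)) w := fun w => by
      rw [pow_succ', Module.End.mul_apply]
    rw [pow_succ' _ (k + 1), Module.End.mul_apply, dq_Th, ih, hc, map_add, map_nsmul,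
      Module.End.mul_apply, hs, add_assoc, add_smul (k + 1) 1, one_smul]

lemma dx_Th_pow (k : ℕ) (v : V) : O.dx ((O.Th ^ k) v) = (O.Th ^ k) (O.dx v) := by
  induction k generalizing v with
  | zero => simp
  | succ k ih => rw [pow_succ, Module.End.mul_apply, ih, dx_Th, Module.End.mul_apply]

lemma NY_Th_pow (k : ℕ) (v : V) : O.NY ((O.Th ^ k) v) = (O.Th ^ k) (O.NY v) + k • (O.Th ^ k) v := by
  induction k with
  | zero => simp
  | succ k ih =>
    rw [pow_succ', Module.End.mul_apply, NY_Th, ih, map_add, map_nsmul, add_smul, one_smul,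
      Module.End.mul_apply, add_assoc]

lemma NE_Th_pow (k : ℕ) (v : V) : O.NE ((O.Th ^ k) v) = (O.Th ^ k) (O.NE v) := by
  induction k generalizing v with
  | zero => simp
  | succ k ih => rw [pow_succ, Module.End.mul_apply, ih, NE_Th, Module.End.mul_apply]

/-- In top exterior degree and positive `y`-degree, `dq` is injective. -/
lemma top_inj {d : ℕ} {v : V} (hY : O.NY v = (d + 1) • v) (hE : O.NE v = m • v)
    (hq : O.dq v = 0) : v = 0 := by
  have key := O.dq_yw v
  rw [hq, O.yw_eq_zero hE, hE, hY, map_zero, map_zero, zero_add, zero_add] at key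
  refine nsmul_inj (Nat.succ_ne_zero d) ?_
  simpa using key

/-- Lifting of `dx`-cycles in exterior degree `m - 1`: they are the `Th ^ d (dx v)` with `v` of top
exterior degree and `y`-degree `0`. -/
theorem exact_top {p : ℕ} (hp : p + 1 = m) (d : ℕ) : ∀ (u : V), O.Good p d u → O.NY u = d • u →
    O.NE u = p • u → O.dx u = 0 → O.dq u = 0 →
    ∃ v, (O.Th ^ d) (O.dx v) = u ∧ O.NY v = 0 ∧ O.NE v = m • v := by
  induction d with
  | zero =>
    intro u hG hY hE hx _
    obtain ⟨w, h1, h2, h3, -⟩ := O.dx_lift hG hY hE hx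
    exact ⟨w, by simpa using h1, by simpa using h2, by rw [h3, hp]⟩
  | succ d ih =>
    intro u hG hY hE hx hq
    obtain ⟨w, h1, h2, h3, h4⟩ := O.dx_lift hG hY hE hx
    have h3' : O.NE w = m • w := by rw [h3, hp]
    obtain ⟨v', g1, g2, g3⟩ := ih (O.dq w) (h4 d rfl)
      (by rw [NY_dq, h2, map_nsmul, add_smul, one_smul, add_sub_cancel_right])
      (by rw [NE_dq, h3, map_nsmul, add_smul, one_smul, add_sub_cancel_right])
      (by rw [← neg_eq_zero, ← dq_dx, h1, hq]) (O.dq_dq w)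
    obtain ⟨v, rfl⟩ := exists_div (Nat.succ_ne_zero d) v'
    rw [map_nsmul] at g2 g3
    have g2' := nsmul_inj (Nat.succ_ne_zero d) g2
    have g3' : O.NE v = m • v := by
      have : (d + 1) • (O.NE v - m • v) = 0 := by
        rw [smul_sub, g3, smul_comm, sub_self]
      exact sub_eq_zero.mp (nsmul_inj (Nat.succ_ne_zero d) this)
    -- The factor `d + 1` in `v' = (d + 1) • v` comes from `dq (Th ^ (d + 1) v)`; see `dq_Th_pow`.
    have hz : w - (O.Th ^ (d + 1)) v = 0 := by
      apply O.top_inj (d := d)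
      · rw [map_sub, NY_Th_pow, g2', h2, map_zero, zero_add, smul_sub]
      · rw [map_sub, NE_Th_pow, g3', h3', map_nsmul, smul_sub]
      · rw [map_sub, dq_Th_pow, O.dq_eq_zero g2', ← g1, map_zero, zero_add, map_nsmul, map_nsmul,
          sub_self]
    refine ⟨v, ?_, g2', g3'⟩
    rw [← dx_Th_pow, ← sub_eq_zero.mp hz, h1]

/-- Injectivity of the last differential.  `Th` is cancelled by applying `∂_0`, which maps
`Th ^ (k + 1) w` to `(k + 1) X_0 Th ^ k w` when `w` has `y`-degree `0`. -/
theorem inj_top (hm : 0 < m) {d : ℕ} {v : V} (hY : O.NY v = 0) (hE : O.NE v = m • v)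
    (h : (O.Th ^ d) (O.dx v) = 0) : v = 0 := by
  have hx : O.dx v = 0 := by
    induction d with
    | zero => simpa using h
    | succ d ih =>
      apply ih
      have hq : ∀ k w, (∀ i, O.q i w = 0) → O.q ⟨0, hm⟩ ((O.Th ^ (k + 1)) w) =
          (k + 1) • (X ⟨0, hm⟩ : PolyS m) • (O.Th ^ k) w := by
        intro k w hw
        induction k with
        | zero => simp [q_Th, hw]
        | succ k ihk =>
          rw [pow_succ', Module.End.mul_apply, q_Th, ihk, map_nsmul, map_smul,
            ← Module.End.mul_apply O.Th, ← pow_succ', add_smul (k + 1) 1, one_smul]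
      have := hq d (O.dx v) (fun i => by rw [q_dx, O.q_eq_zero hY, map_zero])
      rw [h, map_zero] at this
      exact O.x_inj _ _ (nsmul_inj (Nat.succ_ne_zero d) this.symm)
  rw [NE_apply] at hE
  rw [dx_apply] at hx
  obtain ⟨w, h1, h2, -⟩ := O.koszul m v hm hx hE
  rw [← h1, O.ne_le _ w (Nat.lt_succ_self m) h2]
  simp

/-- The `y`-degree of the `p`-th term of the resolution. -/
def yd (n d p : ℕ) : ℕ := if p ≤ n then d else 0

variable {n : ℕ} [Module (PolyS (n + 1)) V] [IsScalarTower ℂ (PolyS (n + 1)) V] (O : Ops (n + 1) V)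

/-- The `p`-th term of the resolution.  It is zero for `p > n + 1`; see `Ops.K_big`. -/
def K (d p : ℕ) : Submodule (PolyS (n + 1)) V where
  carrier := {v | O.NY v = yd n d p • v ∧ O.NE v = p • v ∧ O.dq v = 0}
  add_mem' := by
    rintro a b ⟨h1, h2, h3⟩ ⟨g1, g2, g3⟩
    exact ⟨by rw [map_add, h1, g1, smul_add], by rw [map_add, h2, g2, smul_add],
      by rw [map_add, h3, g3, add_zero]⟩
  zero_mem' := by simp
  smul_mem' := by
    rintro c a ⟨h1, h2, h3⟩
    exact ⟨by rw [map_smul, h1, smul_comm], by rw [map_smul, h2, smul_comm],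
      by rw [map_smul, h3, smul_zero]⟩

lemma mem_K {d p : ℕ} {v : V} :
    v ∈ O.K d p ↔ O.NY v = yd n d p • v ∧ O.NE v = p • v ∧ O.dq v = 0 := Iff.rfl

/-- The differential of the resolution: `dx` for `p ≠ n`, and `Th ^ d ∘ dx` for `p = n`. -/
def D (d p : ℕ) : V →ₗ[PolyS (n + 1)] V := (O.Th ^ (yd n d p - yd n d (p + 1))) ∘ₗ O.dx

lemma D_lt {d p : ℕ} (h : p < n) (v : V) : O.D d p v = O.dx v := by
  have : yd n d p - yd n d (p + 1) = 0 := by simp [yd, h.le, Nat.succ_le_of_lt h]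
  simp [D, this]

lemma D_eq (d : ℕ) (v : V) : O.D d n v = (O.Th ^ d) (O.dx v) := by
  simp [D, yd]

lemma K_big {d p : ℕ} (h : n + 1 < p) {v : V} (hv : v ∈ O.K d p) : v = 0 := by
  have := hv.2.1
  rw [NE_apply] at this
  exact O.ne_le p v h this

lemma dx_mem {d p : ℕ} (h : p < n) {v : V} (hv : v ∈ O.K d (p + 1)) : O.dx v ∈ O.K d p := by
  obtain ⟨h1, h2, h3⟩ := hv
  have e : yd n d (p + 1) = yd n d p := by simp [yd, h.le, Nat.succ_le_of_lt h]
  refine ⟨?_, ?_, ?_⟩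
  · rw [NY_dx, h1, map_nsmul, e]
  · rw [NE_dx, h2, map_nsmul, add_smul, one_smul, add_sub_cancel_right]
  · rw [dq_dx, h3, map_zero, neg_zero]

lemma D_mem {d p : ℕ} {v : V} (hv : v ∈ O.K d (p + 1)) : O.D d p v ∈ O.K d p := by
  rcases lt_trichotomy p n with h | rfl | h
  · rw [D_lt O h]
    exact O.dx_mem h hv
  · obtain ⟨h1, h2, h3⟩ := hv
    have e : yd p d (p + 1) = 0 := by simp [yd]
    have e' : yd p d p = d := by simp [yd]
    rw [e, zero_smul] at h1
    rw [D_eq]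
    refine ⟨?_, ?_, ?_⟩
    · rw [NY_Th_pow, NY_dx, h1, map_zero, map_zero, zero_add, e']
    · rw [NE_Th_pow, NE_dx, h2, map_nsmul, add_smul, one_smul, add_sub_cancel_right, map_nsmul]
    · cases d with
      | zero => rw [pow_zero, Module.End.one_apply, dq_dx, h3, map_zero, neg_zero]
      | succ d => rw [dq_Th_pow, dq_dx, h3, dx_dx]; simp
  · rw [O.K_big (by omega) hv, map_zero]
    exact zero_mem _

lemma D_D (d p : ℕ) (v : V) : O.D d p (O.D d (p + 1) v) = 0 := by
  have : O.dx (O.D d (p + 1) v) = 0 := by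
    rw [D, LinearMap.comp_apply, dx_Th_pow, dx_dx, map_zero]
  rw [D, LinearMap.comp_apply, this, map_zero]

theorem exact_of_good {d p : ℕ} (hp : p ≤ n) {u : V} (hu : u ∈ O.K d p) (hG : O.Good p d u)
    (hx : O.dx u = 0) : ∃ w ∈ O.K d (p + 1), O.D d p w = u := by
  obtain ⟨h1, h2, h3⟩ := hu
  have e : yd n d p = d := by simp [yd, hp]
  rw [e] at h1
  rcases hp.lt_or_eq with h | rfl
  · obtain ⟨w, g1, g2, g3, g4⟩ := O.exact_mid (by omega) d u hG h1 h2 hx h3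
    have e' : yd n d (p + 1) = d := by simp [yd, Nat.succ_le_of_lt h]
    exact ⟨w, ⟨by rw [g2, e'], g3, g4⟩, by rw [O.D_lt h, g1]⟩
  · obtain ⟨w, g1, g2, g3⟩ := O.exact_top rfl d u hG h1 h2 hx h3
    have e' : yd p d (p + 1) = 0 := by simp [yd]
    exact ⟨w, ⟨by rw [g2, e', zero_smul], g3, O.dq_eq_zero g2⟩, by rw [O.D_eq, g1]⟩

theorem D_exact {d p : ℕ} {u : V} (hu : u ∈ O.K d (p + 1)) (h : O.D d p u = 0) :
    ∃ w ∈ O.K d (p + 2), O.D d (p + 1) w = u := by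
  rcases lt_trichotomy p n with hp | rfl | hp
  · rw [O.D_lt hp] at h
    exact O.exact_of_good hp hu (Or.inl p.succ_pos) h
  · refine ⟨0, zero_mem _, ?_⟩
    obtain ⟨h1, h2, h3⟩ := hu
    have e' : yd p d (p + 1) = 0 := by simp [yd]
    rw [D_eq] at h
    rw [O.inj_top p.succ_pos (by rw [h1, e', zero_smul]) h2 h, map_zero]
  · exact ⟨0, zero_mem _, by rw [O.K_big (by omega) hu, map_zero]⟩

/-- `X_i ^ (d + 1)` annihilates the cokernel of `K d 1 → K d 0`. -/
theorem D_ann {d : ℕ} {u : V} (hu : u ∈ O.K d 0) (i : Fin (n + 1)) :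
    ∃ w ∈ O.K d 1, O.D d 0 w = (X i : PolyS (n + 1)) ^ (d + 1) • u := by
  obtain ⟨h1, h2, h3⟩ := id hu
  have h2' : O.NE u = 0 := by rw [h2, zero_smul]
  have e : yd n d 0 = d := by simp [yd]
  refine O.exact_of_good n.zero_le (Submodule.smul_mem _ _ hu)
    (Or.inr ⟨rfl, i, u, by rw [h1, e], h2', rfl⟩) ?_
  rw [map_smul, dx_apply]
  simp [O.io_eq_zero h2']

end Ops

end KernelComplex

/-! ### Polynomial-valued exterior algebra -/

section PolynomialForms

open scoped TensorProduct

variable {m : ℕ}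

/-- The space `ℂ[y] ⊗ Λ(ℂ^m)`: a family of polynomials in `y` indexed by the basis `e_s` of `Λ`, for
`s ⊆ Fin m`. -/
abbrev W (m : ℕ) : Type := Finset (Fin m) → PolyS m

/-- The sign by which `e_i ∧ e_s` differs from `e_{s ∪ {i}}`. -/
def sg (i : Fin m) (s : Finset (Fin m)) : ℂ := (-1) ^ (s.filter (· < i)).card

lemma sg_mul_self (i : Fin m) (s : Finset (Fin m)) : sg i s * sg i s = 1 := by
  rw [sg, ← mul_pow]; simp

lemma sg_insert (i j : Fin m) (s : Finset (Fin m)) (h : j ∉ s) :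
    sg i (insert j s) = (if j < i then -1 else 1) * sg i s := by
  unfold sg
  rw [Finset.filter_insert]
  split_ifs with hj
  · rw [Finset.card_insert_of_notMem (by simp [h]), pow_succ']
  · rw [one_mul]

lemma sg_erase (i j : Fin m) (s : Finset (Fin m)) (h : j ∈ s) :
    sg i s = (if j < i then -1 else 1) * sg i (s.erase j) := by
  conv_lhs => rw [← Finset.insert_erase h]
  exact sg_insert i j _ (Finset.notMem_erase j s)

/-- Contraction with the `i`-th dual basis vector. -/
def ioW (i : Fin m) : W m →ₗ[ℂ] W m where
  toFun w s := if i ∈ s then 0 else sg i s • w (insert i s)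
  map_add' a b := by ext1 s; simp only [Pi.add_apply]; split_ifs <;> simp
  map_smul' c a := by
    ext1 s; simp only [Pi.smul_apply, RingHom.id_apply]; split_ifs
    · simp
    · rw [smul_comm]

/-- Exterior multiplication by `e_i`. -/
def epW (i : Fin m) : W m →ₗ[ℂ] W m where
  toFun w s := if i ∈ s then sg i s • w (s.erase i) else 0
  map_add' a b := by ext1 s; simp only [Pi.add_apply]; split_ifs <;> simp
  map_smul' c a := by
    ext1 s; simp only [Pi.smul_apply, RingHom.id_apply]; split_ifs
    · rw [smul_comm]
    · simp

/-- Multiplication by `y_i`. -/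
def yW (i : Fin m) : W m →ₗ[ℂ] W m where
  toFun w s := X i * w s
  map_add' a b := by ext1 s; simp [mul_add]
  map_smul' c a := by ext1 s; simp

/-- The derivative in `y_i`. -/
def qW (i : Fin m) : W m →ₗ[ℂ] W m where
  toFun w s := pderiv i (w s)
  map_add' a b := by ext1 s; simp
  map_smul' c a := by ext1 s; simp

lemma ioW_apply (i : Fin m) (w : W m) (s) :
    ioW i w s = if i ∈ s then 0 else sg i s • w (insert i s) := rfl
lemma epW_apply (i : Fin m) (w : W m) (s) :
    epW i w s = if i ∈ s then sg i s • w (s.erase i) else 0 := rfl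
lemma yW_apply (i : Fin m) (w : W m) (s) : yW i w s = X i * w s := rfl
lemma qW_apply (i : Fin m) (w : W m) (s) : qW i w s = pderiv i (w s) := rfl

lemma yW_yW (i j : Fin m) (w : W m) : yW i (yW j w) = yW j (yW i w) := by
  ext1 s; simp only [yW_apply]; ring

lemma pderiv_comm (i j : Fin m) (p : PolyS m) : pderiv i (pderiv j p) = pderiv j (pderiv i p) := by
  have h : (⁅(pderiv i : Derivation ℂ (PolyS m) (PolyS m)), pderiv j⁆ : Derivation ℂ (PolyS m) (PolyS m)) = 0 := by
    apply MvPolynomial.derivation_ext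
    intro k
    rw [Derivation.commutator_apply]
    simp [pderiv_X, Pi.single_apply, apply_ite]
  have := congrArg (fun D => D p) h
  rw [Derivation.commutator_apply] at this
  exact sub_eq_zero.mp this

lemma qW_qW (i j : Fin m) (w : W m) : qW i (qW j w) = qW j (qW i w) := by
  ext1 s; simp only [qW_apply]; exact pderiv_comm i j _

lemma qW_yW (i j : Fin m) (w : W m) :
    qW i (yW j w) = (if i = j then w else 0) + yW j (qW i w) := by
  ext1 s
  simp only [qW_apply, yW_apply, Derivation.leibniz, pderiv_X, Pi.add_apply, smul_eq_mul]
  by_cases h : i = j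
  · subst h; simp; ring
  · have : j ≠ i := Ne.symm h
    simp [h]

lemma ioW_yW (i j : Fin m) (w : W m) : ioW i (yW j w) = yW j (ioW i w) := by
  ext1 s; simp only [ioW_apply, yW_apply]; split_ifs <;> simp

lemma ioW_qW (i j : Fin m) (w : W m) : ioW i (qW j w) = qW j (ioW i w) := by
  ext1 s; simp only [ioW_apply, qW_apply]; split_ifs <;> simp

lemma epW_yW (i j : Fin m) (w : W m) : epW i (yW j w) = yW j (epW i w) := by
  ext1 s; simp only [epW_apply, yW_apply]; split_ifs <;> simp

lemma epW_qW (i j : Fin m) (w : W m) : epW i (qW j w) = qW j (epW i w) := by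
  ext1 s; simp only [epW_apply, qW_apply]; split_ifs <;> simp

lemma ioW_ioW (i j : Fin m) (w : W m) : ioW i (ioW j w) = - ioW j (ioW i w) := by
  ext1 s
  simp only [ioW_apply, Pi.neg_apply]
  by_cases hij : i = j
  · subst hij; simp
  have hji : j ≠ i := Ne.symm hij
  by_cases hi : i ∈ s
  · simp [hi]
  by_cases hj : j ∈ s
  · simp [hj]
  simp only [hi, hj, Finset.mem_insert, hij, hji, or_self, if_false, smul_smul]
  rw [sg_insert _ _ _ hi, sg_insert _ _ _ hj, Finset.insert_comm, ← neg_smul]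
  congr 1
  rcases lt_or_gt_of_ne hij with h | h
  · simp [h, h.not_gt]; ring
  · simp [h, h.not_gt]; ring

lemma epW_epW (i j : Fin m) (w : W m) : epW i (epW j w) = - epW j (epW i w) := by
  ext1 s
  simp only [epW_apply, Pi.neg_apply]
  by_cases hij : i = j
  · subst hij; simp
  have hji : j ≠ i := Ne.symm hij
  by_cases hi : i ∈ s
  swap
  · simp [hi]
  by_cases hj : j ∈ s
  swap
  · simp [hj]
  simp only [hi, hj, Finset.mem_erase, hij, hji, if_true, smul_smul, ne_eq, not_false_eq_true,
    and_self]
  rw [sg_erase i j s hj, sg_erase j i s hi, Finset.erase_right_comm, ← neg_smul]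
  congr 1
  rcases lt_or_gt_of_ne hij with h | h
  · simp [h, h.not_gt]; ring
  · simp [h, h.not_gt]; ring

lemma ioW_epW (i j : Fin m) (w : W m) :
    ioW i (epW j w) = (if i = j then w else 0) - epW j (ioW i w) := by
  ext1 s
  by_cases hij : i = j
  · subst hij
    simp only [if_true, Pi.sub_apply, ioW_apply, epW_apply]
    by_cases hi : i ∈ s
    · simp only [hi, if_true, Finset.notMem_erase, if_false, smul_smul, Finset.insert_erase]
      have := sg_erase i i s hi
      rw [if_neg (lt_irrefl i), one_mul] at this
      rw [← this, sg_mul_self, one_smul, sub_self]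
    · simp only [hi, if_false, Finset.mem_insert_self, if_true, smul_smul,
        Finset.erase_insert hi, sg_insert i i s hi, lt_irrefl, one_mul, sg_mul_self, one_smul,
        sub_zero]
  have hji : j ≠ i := Ne.symm hij
  simp only [hij, if_false, zero_sub, Pi.neg_apply, ioW_apply, epW_apply]
  by_cases hi : i ∈ s
  · simp [hi, hij]
  by_cases hj : j ∈ s
  swap
  · simp [hj, hji]
  simp only [hi, hj, Finset.mem_erase, Finset.mem_insert, hij, hji, if_true, smul_smul, ne_eq,
    not_false_eq_true, if_false, or_true, and_false]
  rw [sg_erase i j s hj, sg_insert j i s hi, Finset.erase_insert_of_ne hij, ← neg_smul]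
  congr 1
  rcases lt_or_gt_of_ne hij with h | h
  · simp [h, h.not_gt]; ring
  · simp [h, h.not_gt]; ring

/-- The exterior degree operator on `W m`. -/
def NEW : W m →ₗ[ℂ] W m := ∑ i, epW i ∘ₗ ioW i

lemma NEW_apply (w : W m) (s) : NEW w s = s.card • w s := by
  have : ∀ i, epW i (ioW i w) s = if i ∈ s then w s else 0 := by
    intro i
    simp only [ioW_apply, epW_apply]
    by_cases hi : i ∈ s
    · simp only [hi, if_true, Finset.notMem_erase, if_false, smul_smul, Finset.insert_erase]
      have := sg_erase i i s hi
      rw [if_neg (lt_irrefl i), one_mul] at this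
      rw [← this, sg_mul_self, one_smul]
    · simp [hi]
  simp [NEW, this]

lemma NEW_epW (i : Fin m) (w : W m) : NEW (epW i w) = epW i (NEW w) + epW i w := by
  ext1 s
  simp only [NEW_apply, epW_apply, Pi.add_apply]
  split_ifs with h
  · rw [smul_comm, ← smul_add]
    congr 1
    rw [← Finset.card_erase_add_one h, add_smul, one_smul]
  · simp

/-- The Euler operator `∑ X_i ∂_i` of the polynomial ring. -/
def eul : PolyS m →ₗ[ℂ] PolyS m := ∑ i, LinearMap.mulLeft ℂ (X i) ∘ₗ (pderiv i).toLinearMap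

lemma eul_apply (p : PolyS m) : eul p = ∑ i, X i * pderiv i p := by simp [eul]

lemma eul_monomial (a : Fin m →₀ ℕ) (c : ℂ) : eul (monomial a c) = a.degree • monomial a c := by
  rw [eul_apply]
  exact (isHomogeneous_monomial c rfl).sum_X_mul_pderiv

lemma coeff_eul (p : PolyS m) (b : Fin m →₀ ℕ) : coeff b (eul p) = b.degree * coeff b p := by
  induction p using MvPolynomial.induction_on' with
  | monomial u a =>
    rw [eul_monomial]
    simp only [← Nat.cast_smul_eq_nsmul ℂ, coeff_smul, coeff_monomial, smul_eq_mul]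
    split_ifs with h
    · rw [h]
    · simp
  | add p q hp hq => rw [map_add, coeff_add, coeff_add, hp, hq, mul_add]

lemma eul_eq_iff (p : PolyS m) (k : ℕ) : eul p = k • p ↔ p.IsHomogeneous k := by
  constructor
  · intro h b hb
    have := congrArg (coeff b) h
    rw [coeff_eul, ← Nat.cast_smul_eq_nsmul ℂ, coeff_smul, smul_eq_mul] at this
    have h2 := mul_right_cancel₀ hb this
    have h3 : b.degree = k := by exact_mod_cast h2
    rw [← h3, Finsupp.degree_eq_weight_one]
    rfl
  · intro h
    rw [eul_apply]
    exact h.sum_X_mul_pderiv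

/-- The `y`-degree operator on `W m`. -/
def NYW : W m →ₗ[ℂ] W m := ∑ i, yW i ∘ₗ qW i

lemma NYW_apply (w : W m) (s) : NYW w s = eul (w s) := by
  simp [NYW, eul_apply, yW_apply, qW_apply]

/-- Division of the degree `e` part of a polynomial by `e + c`, an inverse of `eul + c` for
`c > 0`. -/
def TT (c : ℕ) : PolyS m →ₗ[ℂ] PolyS m :=
  (basisMonomials (Fin m) ℂ).constr ℂ (fun a => ((a.degree + c : ℂ)⁻¹) • monomial a 1)

lemma TT_monomial (c : ℕ) (a : Fin m →₀ ℕ) :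
    TT c (monomial a 1) = ((a.degree + c : ℂ)⁻¹) • monomial a 1 := by
  have := (basisMonomials (Fin m) ℂ).constr_basis ℂ
    (fun a => ((a.degree + c : ℂ)⁻¹) • (monomial a 1 : PolyS m)) a
  rwa [coe_basisMonomials] at this

lemma TT_X_mul (c : ℕ) (i : Fin m) (r : PolyS m) : TT c (X i * r) = X i * TT (c + 1) r := by
  have : TT c ∘ₗ LinearMap.mulLeft ℂ (X i) = LinearMap.mulLeft ℂ (X i) ∘ₗ TT (m := m) (c + 1) := by
    apply (basisMonomials (Fin m) ℂ).ext
    intro a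
    simp only [coe_basisMonomials, LinearMap.comp_apply, LinearMap.mulLeft_apply, TT_monomial]
    rw [mul_smul_comm, X, monomial_mul, mul_one, TT_monomial]
    simp only [map_add, Finsupp.degree_single]
    push_cast
    congr 2; ring
  exact LinearMap.congr_fun this r

lemma TT_eul (c : ℕ) (hc : 0 < c) (r : PolyS m) : TT c (eul r + c • r) = r := by
  have : TT c ∘ₗ (eul + c • LinearMap.id) = (LinearMap.id : PolyS m →ₗ[ℂ] PolyS m) := by
    apply (basisMonomials (Fin m) ℂ).ext
    intro a
    simp only [coe_basisMonomials, LinearMap.comp_apply, LinearMap.add_apply, LinearMap.smul_apply,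
      LinearMap.id_apply, eul_monomial, map_add, map_nsmul, TT_monomial]
    rw [← add_smul, ← Nat.cast_smul_eq_nsmul ℂ, smul_smul]
    push_cast
    rw [mul_inv_cancel₀, one_smul]
    exact_mod_cast (by omega : a.degree + c ≠ 0)
  exact LinearMap.congr_fun this r

end PolynomialForms

/-! ### Koszul exactness -/

section Koszul

open scoped TensorProduct

variable {m : ℕ}

/-- The `S`-module `S ⊗ ℂ[y] ⊗ Λ`. -/
abbrev VV (m : ℕ) : Type := PolyS m ⊗[ℂ] W m

lemma bc_ext {f g : VV m →ₗ[PolyS m] VV m} (h : ∀ w : W m, f (1 ⊗ₜ w) = g (1 ⊗ₜ w)) : f = g := by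
  apply TensorProduct.AlgebraTensorModule.curry_injective
  exact LinearMap.ext_ring (LinearMap.ext fun w => h w)

lemma bc_inj {f : W m →ₗ[ℂ] W m} (hf : ∀ w, f w = 0 → w = 0) {v : VV m}
    (hv : f.baseChange (PolyS m) v = 0) : v = 0 := by
  have h : Function.Injective (f.lTensor (PolyS m)) :=
    Module.Flat.lTensor_preserves_injective_linearMap f
      (LinearMap.ker_eq_bot.mp (LinearMap.ker_eq_bot'.mpr hf))
  apply h
  rw [map_zero]
  exact hv

/-- The `S`-linear extension of an operator on `W m`. -/
abbrev bc (f : W m →ₗ[ℂ] W m) : VV m →ₗ[PolyS m] VV m := f.baseChange (PolyS m)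

lemma bc_NEW (v : VV m) : ∑ i, bc (epW i) (bc (ioW i) v) = bc NEW v := by
  have : (∑ i, bc (epW i) ∘ₗ bc (ioW i) : VV m →ₗ[PolyS m] VV m) = bc NEW := by
    apply bc_ext; intro w; simp [NEW, TensorProduct.tmul_sum]
  rw [← this]; simp

lemma bc_NYW (v : VV m) : ∑ i, bc (yW i) (bc (qW i) v) = bc NYW v := by
  have : (∑ i, bc (yW i) ∘ₗ bc (qW i) : VV m →ₗ[PolyS m] VV m) = bc NYW := by
    apply bc_ext; intro w; simp [NYW, TensorProduct.tmul_sum]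
  rw [← this]; simp

/-- The degree operator of the `X`-variables on `VV m`. -/
def eulV : VV m →ₗ[ℂ] VV m := TensorProduct.map eul LinearMap.id

/-- The operator `TT c` acting on the factor `S` of `VV m`. -/
def TV (c : ℕ) : VV m →ₗ[ℂ] VV m := TensorProduct.map (TT c) LinearMap.id

/-- The exterior derivative in the `X`-variables, `∑ ∂/∂X_i ⊗ ε_i`. -/
def dR : VV m →ₗ[ℂ] VV m := ∑ i, TensorProduct.map (pderiv i).toLinearMap (epW i)

/-- The combination `∑ X_i f_i` of linear maps. -/
def sumSmul {V : Type*} [AddCommGroup V] [Module (PolyS m) V] (f : Fin m → V →ₗ[PolyS m] V) :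
    V →ₗ[PolyS m] V := ∑ i, (X i : PolyS m) • f i

lemma sumSmul_apply {V : Type*} [AddCommGroup V] [Module (PolyS m) V]
    (f : Fin m → V →ₗ[PolyS m] V) (v : V) :
    sumSmul f v = ∑ i, (X i : PolyS m) • f i v := by simp [sumSmul]

/-- The Koszul differential on `VV m`. -/
def dxV : VV m →ₗ[PolyS m] VV m := sumSmul fun i => bc (ioW i)

lemma dxV_tmul (r : PolyS m) (w : W m) : dxV (r ⊗ₜ w) = ∑ i, (X i * r) ⊗ₜ[ℂ] ioW i w := by
  simp [dxV, sumSmul_apply, TensorProduct.smul_tmul']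

lemma dR_tmul (r : PolyS m) (w : W m) : dR (r ⊗ₜ w) = ∑ i, (pderiv i r) ⊗ₜ[ℂ] epW i w := by
  simp [dR]

/-- Cartan's formula: the anticommutator of the Koszul differential and the exterior derivative is
the total degree in the `X`-variables and the exterior variables. -/
lemma homotopy (z : VV m) : dxV (dR z) + dR (dxV z) = eulV z + bc NEW z := by
  induction z using TensorProduct.induction_on with
  | zero => simp
  | add a b ha hb =>
    simp only [map_add]
    rw [add_add_add_comm, ha, hb]; abel
  | tmul r w =>
    have h1 : ∀ i j, (X j * pderiv i r) ⊗ₜ[ℂ] ioW j (epW i w) + pderiv i (X j * r) ⊗ₜ[ℂ] epW i (ioW j w)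
        = (if i = j then (X j * pderiv i r) ⊗ₜ[ℂ] w else 0) +
          (if i = j then r ⊗ₜ[ℂ] epW i (ioW j w) else 0) := by
      intro i j
      rw [ioW_epW, Derivation.leibniz, pderiv_X, TensorProduct.tmul_sub, TensorProduct.add_tmul]
      by_cases h : i = j
      · subst h; simp
        abel
      · have h' : j ≠ i := Ne.symm h
        simp [h, h']
    rw [dR_tmul, dxV_tmul, map_sum, map_sum]
    simp only [dR_tmul, dxV_tmul]
    rw [Finset.sum_comm (s := Finset.univ) (t := Finset.univ)
      (f := fun x i => (pderiv i) (X x * r) ⊗ₜ[ℂ] (epW i) ((ioW x) w)), ← Finset.sum_add_distrib]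
    simp only [← Finset.sum_add_distrib, h1]
    simp only [Finset.sum_add_distrib]
    simp [eulV, NEW, eul_apply, TensorProduct.sum_tmul, TensorProduct.tmul_sum]

lemma TV_dxV (c : ℕ) (z : VV m) : dxV (TV (c + 1) z) = TV c (dxV z) := by
  induction z using TensorProduct.induction_on with
  | zero => simp
  | add a b ha hb => simp only [map_add, ha, hb]
  | tmul r w => simp [TV, dxV_tmul, TT_X_mul]

lemma TV_eul (c : ℕ) (hc : 0 < c) (z : VV m) : TV c (eulV z + c • z) = z := by
  induction z using TensorProduct.induction_on with
  | zero => simp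
  | add a b ha hb =>
    conv_rhs => rw [← ha, ← hb]
    rw [← map_add]; congr 1; simp only [map_add, smul_add]; abel
  | tmul r w =>
    have : eulV (r ⊗ₜ[ℂ] w) + c • (r ⊗ₜ[ℂ] w) = (eul r + c • r) ⊗ₜ[ℂ] w := by
      rw [TensorProduct.add_tmul, TensorProduct.smul_tmul']; rfl
    rw [this]
    simp only [TV, TensorProduct.map_tmul, LinearMap.id_apply, TT_eul c hc]

lemma bc_TV (f : W m →ₗ[ℂ] W m) (c : ℕ) (z : VV m) : bc f (TV c z) = TV c (bc f z) := by
  induction z using TensorProduct.induction_on with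
  | zero => simp
  | add a b ha hb => simp only [map_add, ha, hb]
  | tmul r w => simp [TV]

lemma NEW_dR (z : VV m) : bc NEW (dR z) = dR (bc NEW z) + dR z := by
  induction z using TensorProduct.induction_on with
  | zero => simp
  | add a b ha hb => simp only [map_add, ha, hb]; abel
  | tmul r w => simp [dR_tmul, NEW_epW, TensorProduct.tmul_add, Finset.sum_add_distrib]

lemma NYW_epW (i : Fin m) (w : W m) : NYW (epW i w) = epW i (NYW w) := by
  ext1 s
  simp only [NYW_apply, epW_apply]
  split_ifs <;> simp

lemma NYW_dR (z : VV m) : bc NYW (dR z) = dR (bc NYW z) := by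
  induction z using TensorProduct.induction_on with
  | zero => simp
  | add a b ha hb => simp only [map_add, ha, hb]
  | tmul r w => simp [dR_tmul, NYW_epW]

lemma bc_rel {f g : VV m →ₗ[PolyS m] VV m} (h : ∀ w : W m, f (1 ⊗ₜ w) = g (1 ⊗ₜ w)) (v : VV m) :
    f v = g v := by rw [bc_ext h]

/-- The standard operators on `S ⊗ ℂ[y] ⊗ Λ`; Koszul exactness comes from `homotopy`. -/
def opsV (m : ℕ) : Ops m (VV m) where
  y i := bc (yW i)
  q i := bc (qW i)
  io i := bc (ioW i)
  ep i := bc (epW i)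
  y_y i j v := bc_rel (f := bc (yW i) ∘ₗ bc (yW j)) (g := bc (yW j) ∘ₗ bc (yW i))
    (fun w => by simp [yW_yW i]) v
  q_q i j v := bc_rel (f := bc (qW i) ∘ₗ bc (qW j)) (g := bc (qW j) ∘ₗ bc (qW i))
    (fun w => by simp [qW_qW i]) v
  q_y i j v := by
    have := bc_rel (f := bc (qW i) ∘ₗ bc (yW j))
      (g := (if i = j then LinearMap.id else 0) + bc (yW j) ∘ₗ bc (qW i))
      (fun w => by
        simp only [LinearMap.comp_apply, LinearMap.baseChange_tmul, qW_yW, LinearMap.add_apply]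
        split_ifs <;> simp [TensorProduct.tmul_add]) v
    rw [LinearMap.comp_apply, LinearMap.add_apply, LinearMap.comp_apply] at this
    rw [this]; split_ifs <;> simp
  io_y i j v := bc_rel (f := bc (ioW i) ∘ₗ bc (yW j)) (g := bc (yW j) ∘ₗ bc (ioW i))
    (fun w => by simp [ioW_yW i]) v
  io_q i j v := bc_rel (f := bc (ioW i) ∘ₗ bc (qW j)) (g := bc (qW j) ∘ₗ bc (ioW i))
    (fun w => by simp [ioW_qW i]) v
  ep_y i j v := bc_rel (f := bc (epW i) ∘ₗ bc (yW j)) (g := bc (yW j) ∘ₗ bc (epW i))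
    (fun w => by simp [epW_yW i]) v
  ep_q i j v := bc_rel (f := bc (epW i) ∘ₗ bc (qW j)) (g := bc (qW j) ∘ₗ bc (epW i))
    (fun w => by simp [epW_qW i]) v
  io_io i j v := bc_rel (f := bc (ioW i) ∘ₗ bc (ioW j)) (g := - bc (ioW j) ∘ₗ bc (ioW i))
    (fun w => by simp [ioW_ioW i j, TensorProduct.tmul_neg]) v
  ep_ep i j v := bc_rel (f := bc (epW i) ∘ₗ bc (epW j)) (g := - bc (epW j) ∘ₗ bc (epW i))
    (fun w => by simp [epW_epW i j, TensorProduct.tmul_neg]) v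
  io_ep i j v := by
    have := bc_rel (f := bc (ioW i) ∘ₗ bc (epW j))
      (g := (if i = j then LinearMap.id else 0) - bc (epW j) ∘ₗ bc (ioW i))
      (fun w => by
        simp only [LinearMap.comp_apply, LinearMap.baseChange_tmul, ioW_epW, LinearMap.sub_apply]
        split_ifs <;> simp [TensorProduct.tmul_sub, TensorProduct.tmul_neg]) v
    rw [LinearMap.comp_apply, LinearMap.sub_apply, LinearMap.comp_apply] at this
    rw [this]; split_ifs <;> simp
  ny_pos v hv := by
    rw [bc_NYW] at hv
    apply bc_inj (f := NYW + LinearMap.id)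
    · intro w hw
      ext1 s
      have h1 : eul (w s) + 1 • w s = 0 := by
        rw [← NYW_apply, one_smul]; exact congrFun hw s
      rw [← TT_eul 1 one_pos (w s), h1, map_zero, Pi.zero_apply]
    · rw [LinearMap.baseChange_add, LinearMap.add_apply, LinearMap.baseChange_id]; exact hv
  ne_pos v hv := by
    rw [bc_NEW] at hv
    apply bc_inj (f := NEW + LinearMap.id)
    · intro w hw
      ext1 s
      have h1 : (s.card + 1) • w s = 0 := by
        rw [add_smul, ← NEW_apply, one_smul]; exact congrFun hw s
      exact (smul_eq_zero.mp h1).resolve_left (Nat.succ_ne_zero _)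
    · rw [LinearMap.baseChange_add, LinearMap.add_apply, LinearMap.baseChange_id]; exact hv
  ne_le k v hk hv := by
    rw [bc_NEW] at hv
    apply bc_inj (f := NEW - (k : ℂ) • LinearMap.id)
    · intro w hw
      ext1 s
      have h1 : ((s.card : ℂ) - k) • w s = 0 := by
        have := congrFun hw s
        rw [LinearMap.sub_apply, Pi.sub_apply, NEW_apply] at this
        rw [sub_smul, Nat.cast_smul_eq_nsmul]
        exact this
      refine (smul_eq_zero.mp h1).resolve_left (sub_ne_zero.mpr ?_)
      have := card_finset_fin_le s
      exact_mod_cast (by omega : s.card ≠ k)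
    · rw [LinearMap.baseChange_sub, LinearMap.sub_apply, LinearMap.baseChange_smul,
        LinearMap.baseChange_id, hv, LinearMap.smul_apply, LinearMap.id_apply,
        Nat.cast_smul_eq_nsmul, sub_self]
  x_inj i v h := by
    exact (smul_eq_zero.mp h).resolve_left (X_ne_zero i)
  koszul p v hp hx hE := by
    rw [bc_NEW] at hE
    have hx' : dxV v = 0 := by rw [← hx]; exact sumSmul_apply _ _
    have h := homotopy v
    rw [hx', map_zero, add_zero, hE] at h
    refine ⟨TV (p + 1) (dR v), ?_, ?_, ?_⟩
    · have := TV_dxV p (dR v)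
      rw [h, TV_eul p hp] at this
      exact (sumSmul_apply _ _).symm.trans this
    · rw [bc_NEW, bc_TV, NEW_dR, hE, map_nsmul, map_add, map_nsmul, add_smul, one_smul]
    · intro c hc
      rw [bc_NYW] at hc
      rw [bc_NYW, bc_TV, NYW_dR, hc, map_nsmul, map_nsmul]

end Koszul

/-! ### The kernel spaces and their dimensions -/

section KernelSpaces

open scoped TensorProduct

variable {m : ℕ}
open Ops (yd)

/-- The operator `∑ ∂_i ι_i` on `W m`. -/
def dqW : W m →ₗ[ℂ] W m := ∑ i, qW i ∘ₗ ioW i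

lemma dqW_apply (w : W m) : dqW w = ∑ i, qW i (ioW i w) := by simp [dqW]

lemma bc_dqW (v : VV m) : ∑ i, bc (qW i) (bc (ioW i) v) = bc dqW v := by
  have : (∑ i, bc (qW i) ∘ₗ bc (ioW i) : VV m →ₗ[PolyS m] VV m) = bc dqW := by
    apply bc_ext; intro w; simp [dqW, TensorProduct.tmul_sum]
  rw [← this]; simp

/-- The complex vector space with `K d p = S ⊗ Zsp n d p`. -/
def Zsp (n d p : ℕ) : Submodule ℂ (W (n + 1)) :=
  LinearMap.ker (NYW - (yd n d p : ℂ) • LinearMap.id) ⊓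
    (LinearMap.ker (NEW - (p : ℂ) • LinearMap.id) ⊓ LinearMap.ker dqW)

lemma mem_Zsp {n d p : ℕ} {w : W (n + 1)} :
    w ∈ Zsp n d p ↔ (∀ s, (w s).IsHomogeneous (yd n d p)) ∧ (∀ s, s.card ≠ p → w s = 0) ∧
      dqW w = 0 := by
  simp only [Zsp, Submodule.mem_inf, LinearMap.mem_ker, LinearMap.sub_apply, LinearMap.smul_apply,
    LinearMap.id_apply, sub_eq_zero, Nat.cast_smul_eq_nsmul]
  refine and_congr ?_ (and_congr ?_ Iff.rfl)
  · rw [_root_.funext_iff]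
    refine forall_congr' fun s => ?_
    rw [NYW_apply, Pi.smul_apply, eul_eq_iff]
  · rw [_root_.funext_iff]
    refine forall_congr' fun s => ?_
    rw [NEW_apply, Pi.smul_apply, ← sub_eq_zero, ← Nat.cast_smul_eq_nsmul ℂ,
      ← Nat.cast_smul_eq_nsmul ℂ, ← sub_smul, smul_eq_zero, sub_eq_zero, Nat.cast_inj]
    tauto

instance (k : ℕ) : Module.Finite ℂ (homogeneousSubmodule (Fin m) ℂ k) :=
  Module.Finite.iff_fg.mpr (homogeneousSubmodule_fg (Fin m) ℂ k)

instance (n d p : ℕ) : Module.Finite ℂ (Zsp n d p) := by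
  let f : Zsp n d p →ₗ[ℂ] (Finset (Fin (n + 1)) → homogeneousSubmodule (Fin (n + 1)) ℂ (yd n d p)) :=
    { toFun := fun w s => ⟨w.1 s, (mem_Zsp.mp w.2).1 s⟩
      map_add' := fun a b => rfl
      map_smul' := fun a b => rfl }
  refine Module.Finite.of_injective f ?_
  intro a b h
  ext1
  ext1 s
  exact congrArg Subtype.val (congrFun h s)

/-- The rank of the `p`-th free module of the resolution. -/
def bet (n d p : ℕ) : ℕ := Module.finrank ℂ (Zsp n d p)

lemma card_deg (n d : ℕ) :
    Nat.card {a : Fin (n + 1) →₀ ℕ | a.degree = d} = (n + d).choose n := by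
  have h : {a : Fin (n + 1) →₀ ℕ | a.degree = d} =
      ((Finset.univ : Finset (Fin (n + 1))).finsuppAntidiag d : Set (Fin (n + 1) →₀ ℕ)) := by
    ext a
    simp [Finsupp.degree_eq_sum]
  rw [h, Nat.card_coe_set_eq, Set.ncard_coe_finset, Finset.card_finsuppAntidiag_nat_eq_choose]
  rw [Finset.card_univ, Fintype.card_fin, show n + 1 + d - 1 = n + d by omega]
  rw [← Nat.choose_symm_add]

lemma finrank_hom (n d : ℕ) :
    Module.finrank ℂ (homogeneousSubmodule (Fin (n + 1)) ℂ d) = (n + d).choose n := by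
  have : Finite {a : Fin (n + 1) →₀ ℕ | a.degree = d} := by
    have h : 0 < (n + d).choose n := Nat.choose_pos (by omega)
    rw [← card_deg] at h
    exact (Nat.card_pos_iff.mp h).2
  rw [homogeneousSubmodule_eq_finsupp_supported]
  have := Fintype.ofFinite {a : Fin (n + 1) →₀ ℕ | a.degree = d}
  rw [LinearEquiv.finrank_eq (AddMonoidAlgebra.supportedEquivFinsupp
    {a : Fin (n + 1) →₀ ℕ | a.degree = d}), Module.finrank_finsupp_self, ← card_deg n d,
    Nat.card_eq_fintype_card]

lemma dqW_zero {w : W m} (h : ∀ s, s ≠ ∅ → w s = 0) : dqW w = 0 := by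
  rw [dqW_apply]
  refine Finset.sum_eq_zero fun i _ => ?_
  ext1 s
  rw [qW_apply, ioW_apply, h _ (Finset.insert_ne_empty i s)]
  simp

lemma bet_zero (n d : ℕ) : bet n d 0 = (n + d).choose n := by
  rw [← finrank_hom]
  have e : yd n d 0 = d := by simp [yd]
  have key : ∀ r : homogeneousSubmodule (Fin (n + 1)) ℂ d,
      (Pi.single ∅ r.1 : W (n + 1)) ∈ Zsp n d 0 := by
    intro r
    rw [mem_Zsp, e]
    refine ⟨fun s => ?_, fun s hs => ?_, dqW_zero fun s hs => ?_⟩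
    · by_cases h : s = ∅
      · subst h; rw [Pi.single_eq_same]; exact r.2
      · rw [Pi.single_eq_of_ne h]; exact isHomogeneous_zero _ _ _
    · rw [Pi.single_eq_of_ne]; rintro rfl; exact hs rfl
    · rw [Pi.single_eq_of_ne hs]
  refine LinearEquiv.finrank_eq ?_
  exact
    { toFun := fun w => ⟨w.1 ∅, by have := (mem_Zsp.mp w.2).1 ∅; rwa [e] at this⟩
      map_add' := fun a b => rfl
      map_smul' := fun a b => rfl
      invFun := fun r => ⟨Pi.single ∅ r.1, key r⟩
      left_inv := fun w => by
        ext1; ext1 s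
        by_cases h : s = ∅
        · subst h
          exact Pi.single_eq_same (M := fun _ => PolyS (n + 1)) (∅ : Finset (Fin (n + 1))) _
        · refine (Pi.single_eq_of_ne (M := fun _ => PolyS (n + 1)) h _).trans ?_
          exact ((mem_Zsp.mp w.2).2.1 s (by simpa using h)).symm
      right_inv := fun r => by
        ext1
        exact Pi.single_eq_same (M := fun _ => PolyS (n + 1)) (∅ : Finset (Fin (n + 1))) _ }

/-- Nonvanishing of `Zsp n d p` for `p ≤ n + 1`: if `p ≤ n`, it contains `X_i ^ d ⊗ e_s` for any `s`
of size `p` and any `i ∉ s`. -/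
lemma bet_pos {n p : ℕ} (d : ℕ) (hp : p ≤ n + 1) : bet n d p ≠ 0 := by
  suffices h : ∃ w ∈ Zsp n d p, w ≠ 0 by
    obtain ⟨w, hw, h0⟩ := h
    have : Nontrivial (Zsp n d p) := ⟨⟨w, hw⟩, 0, fun h => h0 (congrArg Subtype.val h)⟩
    exact Module.finrank_pos.ne'
  obtain ⟨s, hs⟩ : ∃ s : Finset (Fin (n + 1)), s.card = p :=
    (Finset.exists_subset_card_eq (s := Finset.univ) (by simpa using hp)).imp fun s h => h.2
  have main : ∀ r : PolyS (n + 1), r ≠ 0 → r.IsHomogeneous (yd n d p) →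
      (∀ i ∈ s, pderiv i r = 0) → ∃ w ∈ Zsp n d p, w ≠ 0 := by
    intro r hr hh hd
    refine ⟨Pi.single s r, mem_Zsp.mpr ⟨fun t => ?_, fun t ht => ?_, ?_⟩, ?_⟩
    · by_cases h : t = s
      · subst h; rw [Pi.single_eq_same]; exact hh
      · rw [Pi.single_eq_of_ne h]; exact isHomogeneous_zero _ _ _
    · rw [Pi.single_eq_of_ne]; rintro rfl; exact ht hs
    · rw [dqW_apply]
      refine Finset.sum_eq_zero fun i _ => ?_
      ext1 t
      rw [qW_apply, ioW_apply]
      split_ifs with hi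
      · simp
      · by_cases h : insert i t = s
        · rw [h, Pi.single_eq_same, Derivation.map_smul, hd i (h ▸ Finset.mem_insert_self i t), smul_zero]; rfl
        · rw [Pi.single_eq_of_ne h]; simp
    · intro h
      exact hr (by simpa using congrFun h s)
  rcases hp.lt_or_eq with h | h
  · obtain ⟨i, hi⟩ : ∃ i, i ∉ s := by
      by_contra! hc
      rw [Finset.eq_univ_of_forall hc, Finset.card_univ, Fintype.card_fin] at hs
      omega
    refine main (X i ^ d) (pow_ne_zero _ (X_ne_zero i)) ?_ ?_
    · have e : yd n d p = d := by simp [yd, Nat.le_of_lt_succ h]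
      rw [e]; exact isHomogeneous_X_pow i d
    · intro j hj
      rw [pderiv_pow, pderiv_X_of_ne (by rintro rfl; exact hi hj), mul_zero]
  · refine main 1 one_ne_zero ?_ ?_
    · have e : yd n d p = 0 := by simp [yd]; omega
      rw [e]; exact isHomogeneous_one _ _
    · intro j _; exact pderiv_one

lemma bet_big {n p : ℕ} (d : ℕ) (hp : n + 1 < p) : bet n d p = 0 := by
  have : Subsingleton (Zsp n d p) := by
    refine subsingleton_of_forall_eq 0 fun w => ?_
    ext1; ext1 s
    refine (mem_Zsp.mp w.2).2.1 s ?_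
    have := card_finset_fin_le s
    omega
  exact Module.finrank_zero_of_subsingleton

end KernelSpaces

/-! ### The complex of free modules -/

section FreeComplex

open scoped TensorProduct
open Ops (yd)

section generic

variable {R A : Type} [CommRing R] [Algebra ℂ R] [AddCommGroup A] [Module ℂ A]

/-- A joint kernel commutes with the flat base change `R ⊗ -`. -/
lemma exists_preimage (f g h : A →ₗ[ℂ] A) (U : Submodule ℂ A)
    (hU : U = LinearMap.ker f ⊓ (LinearMap.ker g ⊓ LinearMap.ker h)) (v : R ⊗[ℂ] A)
    (hf : f.lTensor R v = 0) (hg : g.lTensor R v = 0) (hh : h.lTensor R v = 0) :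
    ∃ z : R ⊗[ℂ] U, U.subtype.lTensor R z = v := by
  let L : A →ₗ[ℂ] A × (A × A) := f.prod (g.prod h)
  have hL : L = LinearMap.inl ℂ A (A × A) ∘ₗ f + (LinearMap.inr ℂ A (A × A) ∘ₗ
      LinearMap.inl ℂ A A) ∘ₗ g + (LinearMap.inr ℂ A (A × A) ∘ₗ LinearMap.inr ℂ A A) ∘ₗ h := by
    ext w <;> simp [L]
  have hv : L.lTensor R v = 0 := by
    rw [hL, LinearMap.lTensor_add, LinearMap.lTensor_add, LinearMap.add_apply, LinearMap.add_apply,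
      LinearMap.lTensor_comp_apply _ _ f, LinearMap.lTensor_comp_apply _ _ g,
      LinearMap.lTensor_comp_apply _ _ h, hf, hg, hh]
    simp
  have hE : Function.Exact U.subtype L := by
    rw [LinearMap.exact_iff, Submodule.range_subtype, hU]
    simp [L, LinearMap.ker_prod]
  exact ((Module.Flat.lTensor_exact R hE) v).mp hv

/-- The embedding of the free module `R ^ N` onto `R ⊗ U` inside `R ⊗ A`, for a basis of `U`. -/
def emb (U : Submodule ℂ A) {N : ℕ} (b : Module.Basis (Fin N) ℂ U) : (Fin N → R) →ₗ[R] R ⊗[ℂ] A :=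
  U.subtype.baseChange R ∘ₗ (b.baseChange R).equivFun.symm.toLinearMap

lemma emb_apply (U : Submodule ℂ A) {N : ℕ} (b : Module.Basis (Fin N) ℂ U) (r : Fin N → R) :
    emb U b r = ∑ s, r s ⊗ₜ[ℂ] (b s : A) := by
  simp [emb, Module.Basis.equivFun_symm_apply, TensorProduct.smul_tmul']

lemma emb_inj (U : Submodule ℂ A) {N : ℕ} (b : Module.Basis (Fin N) ℂ U) :
    Function.Injective (emb (R := R) U b) := by
  have h : Function.Injective (U.subtype.lTensor R) :=
    Module.Flat.lTensor_preserves_injective_linearMap _ U.injective_subtype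
  have h2 : Function.Injective (U.subtype.baseChange R) := h
  simpa [emb] using h2.comp (b.baseChange R).equivFun.symm.injective

lemma emb_surj (f g h : A →ₗ[ℂ] A) (U : Submodule ℂ A)
    (hU : U = LinearMap.ker f ⊓ (LinearMap.ker g ⊓ LinearMap.ker h)) {N : ℕ}
    (b : Module.Basis (Fin N) ℂ U) (v : R ⊗[ℂ] A)
    (hf : f.baseChange R v = 0) (hg : g.baseChange R v = 0) (hh : h.baseChange R v = 0) :
    ∃ r, emb U b r = v := by
  obtain ⟨z, hz⟩ := exists_preimage f g h U hU v hf hg hh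
  exact ⟨(b.baseChange R).equivFun z, by
    rw [emb, LinearMap.comp_apply, LinearEquiv.coe_coe, LinearEquiv.symm_apply_apply]
    exact hz⟩

end generic

variable {n : ℕ}

/-- A chosen basis of `Zsp n d p`. -/
def bZ (n d p : ℕ) : Module.Basis (Fin (bet n d p)) ℂ (Zsp n d p) := Module.finBasis ℂ _

/-- The embedding of a free module into `S ⊗ ℂ[y] ⊗ Λ` with image `K d p`. -/
def J (n d p : ℕ) : (Fin (bet n d p) → PolyS (n + 1)) →ₗ[PolyS (n + 1)] VV (n + 1) :=
  emb (Zsp n d p) (bZ n d p)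

lemma J_inj (n d p : ℕ) : Function.Injective (J n d p) := emb_inj _ _

lemma J_surj {d p : ℕ} {v : VV (n + 1)} (hv : v ∈ (opsV (n + 1)).K d p) :
    ∃ r, J n d p r = v := by
  obtain ⟨h1, h2, h3⟩ := hv
  rw [Ops.NY_apply] at h1
  rw [Ops.NE_apply] at h2
  rw [Ops.dq_apply] at h3
  replace h1 := (bc_NYW v).symm.trans h1
  replace h2 := (bc_NEW v).symm.trans h2
  replace h3 := (bc_dqW v).symm.trans h3
  refine emb_surj _ _ _ _ rfl _ v ?_ ?_ h3
  · rw [LinearMap.baseChange_sub, LinearMap.sub_apply, LinearMap.baseChange_smul,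
      LinearMap.baseChange_id, LinearMap.smul_apply, LinearMap.id_apply,
      Nat.cast_smul_eq_nsmul, sub_eq_zero]
    exact h1
  · rw [LinearMap.baseChange_sub, LinearMap.sub_apply, LinearMap.baseChange_smul,
      LinearMap.baseChange_id, LinearMap.smul_apply, LinearMap.id_apply,
      Nat.cast_smul_eq_nsmul, sub_eq_zero]
    exact h2

lemma one_tmul_mem {d p : ℕ} {w : W (n + 1)} (hw : w ∈ Zsp n d p) :
    (1 ⊗ₜ[ℂ] w : VV (n + 1)) ∈ (opsV (n + 1)).K d p := by
  obtain ⟨h1, h2, h3⟩ := hw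
  simp only [SetLike.mem_coe, LinearMap.mem_ker, LinearMap.sub_apply, LinearMap.smul_apply,
    LinearMap.id_apply, sub_eq_zero, Nat.cast_smul_eq_nsmul] at h1 h2 h3
  refine ⟨?_, ?_, ?_⟩
  · rw [Ops.NY_apply]
    refine (bc_NYW _).trans ?_
    rw [LinearMap.baseChange_tmul, h1, TensorProduct.tmul_smul]
  · rw [Ops.NE_apply]
    refine (bc_NEW _).trans ?_
    rw [LinearMap.baseChange_tmul, h2, TensorProduct.tmul_smul]
  · rw [Ops.dq_apply]
    refine (bc_dqW _).trans ?_
    rw [LinearMap.baseChange_tmul, h3, TensorProduct.tmul_zero]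

lemma J_apply (d p : ℕ) (r) : J n d p r = ∑ s, r s ⊗ₜ[ℂ] (bZ n d p s : W (n + 1)) := emb_apply _ _ _

lemma J_mem {d p : ℕ} (r) : J n d p r ∈ (opsV (n + 1)).K d p := by
  rw [J_apply]
  refine sum_mem fun s _ => ?_
  have : r s ⊗ₜ[ℂ] (bZ n d p s : W (n + 1)) = r s • (1 ⊗ₜ[ℂ] (bZ n d p s : W (n + 1)) : VV (n + 1)) := by
    rw [TensorProduct.smul_tmul', smul_eq_mul, mul_one]
  rw [this]
  exact Submodule.smul_mem _ _ (one_tmul_mem (bZ n d p s).2)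

/-- The identification of the free module of rank `bet n d p` with `K d p`. -/
def JE (n d p : ℕ) : (Fin (bet n d p) → PolyS (n + 1)) ≃ₗ[PolyS (n + 1)] (opsV (n + 1)).K d p :=
  LinearEquiv.ofBijective ((J n d p).codRestrict _ J_mem)
    ⟨fun a b h => J_inj n d p (congrArg Subtype.val h), fun v => by
      obtain ⟨r, hr⟩ := J_surj v.2
      exact ⟨r, Subtype.ext hr⟩⟩

/-- The differential of the resolution in terms of free modules. -/
def DF (n d p : ℕ) : (Fin (bet n d (p + 1)) → PolyS (n + 1)) →ₗ[PolyS (n + 1)]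
    (Fin (bet n d p) → PolyS (n + 1)) :=
  (JE n d p).symm.toLinearMap ∘ₗ
    (((opsV (n + 1)).D d p ∘ₗ J n d (p + 1)).codRestrict _ fun r => (opsV (n + 1)).D_mem (J_mem r))

lemma J_DF (d p : ℕ) (r) : J n d p (DF n d p r) = (opsV (n + 1)).D d p (J n d (p + 1) r) := by
  have : JE n d p (DF n d p r) = ⟨_, (opsV (n + 1)).D_mem (J_mem r)⟩ := by
    simp only [DF, LinearMap.comp_apply, LinearEquiv.coe_coe, LinearEquiv.apply_symm_apply]
    rfl
  exact congrArg Subtype.val this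

lemma DF_exact (n d p : ℕ) : LinearMap.ker (DF n d p) = LinearMap.range (DF n d (p + 1)) := by
  ext r
  constructor
  · intro hr
    have h : (opsV (n + 1)).D d p (J n d (p + 1) r) = 0 := by
      rw [← J_DF, LinearMap.mem_ker.mp hr, map_zero]
    obtain ⟨w, hw, h2⟩ := (opsV (n + 1)).D_exact (J_mem r) h
    obtain ⟨r', rfl⟩ := J_surj hw
    rw [← J_DF] at h2
    exact ⟨r', J_inj _ _ _ h2⟩
  · rintro ⟨r', rfl⟩
    apply J_inj
    rw [J_DF, J_DF, Ops.D_D, map_zero]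

lemma DF_ann (n d : ℕ) (i : Fin (n + 1)) (u) :
    (X i : PolyS (n + 1)) ^ (d + 1) • u ∈ LinearMap.range (DF n d 0) := by
  obtain ⟨w, hw, h⟩ := (opsV (n + 1)).D_ann (J_mem (d := d) (p := 0) u) i
  obtain ⟨r, rfl⟩ := J_surj hw
  rw [← J_DF, ← map_smul] at h
  exact ⟨r, J_inj _ _ _ h⟩

lemma eulV_X {m : ℕ} (i : Fin m) (v : VV m) :
    eulV ((X i : PolyS m) • v) = (X i : PolyS m) • eulV v + (X i : PolyS m) • v := by
  induction v using TensorProduct.induction_on with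
  | zero => simp
  | add a b ha hb => simp only [smul_add, map_add, ha, hb]; abel
  | tmul r w =>
    have : eul (X i * r) = X i * eul r + X i * r := by
      simp only [eul_apply, Derivation.leibniz, pderiv_X, smul_eq_mul, mul_add,
        Finset.sum_add_distrib, Finset.mul_sum]
      congr 1
      · exact Finset.sum_congr rfl fun j _ => by ring
      · rw [Finset.sum_eq_single i]
        · simp
        · intro j _ h; simp [h.symm]
        · simp
    simp only [TensorProduct.smul_tmul', eulV, TensorProduct.map_tmul, smul_eq_mul, this,
      TensorProduct.add_tmul, LinearMap.id_apply]

lemma eulV_bc {m : ℕ} (f : W m →ₗ[ℂ] W m) (v : VV m) : eulV (bc f v) = bc f (eulV v) := by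
  induction v using TensorProduct.induction_on with
  | zero => simp
  | add a b ha hb => simp only [map_add, ha, hb]
  | tmul r w => simp [eulV]

lemma eulV_sum {m : ℕ} (f : Fin m → W m →ₗ[ℂ] W m) {v : VV m} {k : ℕ} (h : eulV v = k • v) :
    eulV (∑ i, (X i : PolyS m) • bc (f i) v) = (k + 1) • ∑ i, (X i : PolyS m) • bc (f i) v := by
  rw [map_sum, Finset.smul_sum]
  refine Finset.sum_congr rfl fun i _ => ?_
  rw [eulV_X, eulV_bc, h, map_nsmul, smul_comm, add_smul, one_smul]

lemma eulV_D (d p : ℕ) (w : W (n + 1)) :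
    eulV ((opsV (n + 1)).D d p (1 ⊗ₜ w)) = (yd n d p - yd n d (p + 1) + 1) •
      ((opsV (n + 1)).D d p (1 ⊗ₜ w)) := by
  have h0 : eulV (1 ⊗ₜ w : VV (n + 1)) = 0 • (1 ⊗ₜ w : VV (n + 1)) := by
    simp [eulV, eul_apply]
  have h1 := eulV_sum ioW h0
  rw [Ops.D, LinearMap.comp_apply, Ops.dx_apply]
  generalize yd n d p - yd n d (p + 1) = e
  change eulV (∑ i, (X i : PolyS (n + 1)) • (opsV (n + 1)).io i (1 ⊗ₜ w : VV (n + 1))) = _ at h1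
  induction e with
  | zero => exact h1
  | succ e ih =>
    rw [pow_succ', Module.End.mul_apply, Ops.Th_apply]
    exact eulV_sum yW ih

lemma eulV_J (d p : ℕ) (r) : eulV (J n d p r) = J n d p (fun s => eul (r s)) := by
  rw [J_apply, J_apply, map_sum]; rfl

/-- The matrix entries of the differential are forms in `X`.  Its degree is read off from the Euler
operator: `Zsp` has degree `0`, while `dx` and `Th` raise the degree by one. -/
lemma DF_hom (n d p : ℕ) (s t) :
    (DF n d p (Pi.single s 1) t).IsHomogeneous (yd n d p - yd n d (p + 1) + 1) := by
  rw [← eul_eq_iff]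
  have h : J n d (p + 1) (Pi.single s 1) = 1 ⊗ₜ (bZ n d (p + 1) s : W (n + 1)) := by
    rw [J_apply, Finset.sum_eq_single s]
    · rw [Pi.single_eq_same]
    · intro t _ ht; rw [Pi.single_eq_of_ne ht, TensorProduct.zero_tmul]
    · simp
  have h2 := eulV_D d p (bZ n d (p + 1) s : W (n + 1))
  rw [← h, ← J_DF, eulV_J, ← map_nsmul] at h2
  exact congrFun (J_inj _ _ _ h2) t

end FreeComplex

/-! ### Vanishing of Ext along a regular sequence -/

section DualComplex

open scoped TensorProduct

section dual

variable {R : Type} [CommRing R]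

lemma exists_lift {P A B : Type} [AddCommGroup P] [AddCommGroup A] [AddCommGroup B]
    [Module R P] [Module R A] [Module R B] [Module.Projective R P] (g : A →ₗ[R] B) (u : P →ₗ[R] B)
    (h : ∀ x, u x ∈ LinearMap.range g) : ∃ v : P →ₗ[R] A, ∀ x, g (v x) = u x := by
  obtain ⟨v, hv⟩ := Module.projective_lifting_property g.rangeRestrict
    (u.codRestrict _ h) g.surjective_rangeRestrict
  exact ⟨v, fun x => congrArg Subtype.val (LinearMap.congr_fun hv x)⟩

variable {F : ℕ → Type} [∀ p, AddCommGroup (F p)] [∀ p, Module R (F p)]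
  [∀ p, Module.Projective R (F p)] (D : ∀ p, F (p + 1) →ₗ[R] F p)
  (hD : ∀ p, LinearMap.ker (D p) = LinearMap.range (D (p + 1)))

include hD in
lemma DD (p : ℕ) (x : F (p + 2)) : D p (D (p + 1) x) = 0 := by
  rw [← LinearMap.mem_ker, hD]; exact ⟨x, rfl⟩

include hD in
/-- One step in the construction of a null-homotopy of multiplication by `f`. -/
lemma exists_next (f : R) (p : ℕ) (h : F p →ₗ[R] F (p + 1))
    (hh : ∀ x, D p (h (D p x)) = f • D p x) :
    ∃ h' : F (p + 1) →ₗ[R] F (p + 2), ∀ x, D (p + 1) (h' x) = f • x - h (D p x) := by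
  refine exists_lift (D (p + 1)) (f • LinearMap.id - h ∘ₗ D p) fun x => ?_
  rw [← hD, LinearMap.mem_ker]
  simp [hh]

include hD in
/-- If `f` annihilates the cokernel of `D 0`, multiplication by `f` is null-homotopic.  Only the part
of the homotopy identity that is visible after applying `D p` is recorded; `exists_next` recovers
the full identity one step further. -/
lemma exists_homotopy (f : R) (hf : ∀ u : F 0, f • u ∈ LinearMap.range (D 0)) (p : ℕ) :
    ∃ h : F p →ₗ[R] F (p + 1), ∀ x, D p (h (D p x)) = f • D p x := by
  induction p with
  | zero =>
    obtain ⟨h, hh⟩ := exists_lift (D 0) (f • LinearMap.id) hf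
    exact ⟨h, fun x => hh _⟩
  | succ p ih =>
    obtain ⟨h, hh⟩ := ih
    obtain ⟨h', hh'⟩ := exists_next D hD f p h hh
    exact ⟨h', fun x => by rw [hh', DD D hD, map_zero, sub_zero]⟩

include hD in
open scoped Pointwise in
/-- If `rs` is weakly `N`-regular and annihilates the module `M` resolved by the complex, then
`Ext^i(M, N) = 0` for `i < rs.length`, that is, `Hom(F, N)` is exact in these degrees.  For
`rs = f :: rs'`, a cocycle `φ` satisfies `f φ = φ ∘ h ∘ D`, where `h` is the null-homotopy of
multiplication by `f`.  Modulo `f`, the cochain `φ ∘ h` is a cocycle with values in `N / f N`, hence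
a coboundary by induction, and after subtracting a lift it becomes divisible by `f`. -/
theorem dual_exact_of_regular (rs : List R) (hf : ∀ f ∈ rs, ∀ u : F 0, f • u ∈ LinearMap.range (D 0)) :
    ∀ (N : Type) [AddCommGroup N] [Module R N], RingTheory.Sequence.IsWeaklyRegular N rs →
      (0 < rs.length → ∀ φ : F 0 →ₗ[R] N, (∀ x, φ (D 0 x) = 0) → φ = 0) ∧
      ∀ i, i + 1 < rs.length → ∀ φ : F (i + 1) →ₗ[R] N, (∀ x, φ (D (i + 1) x) = 0) →
        ∃ ψ : F i →ₗ[R] N, φ = ψ ∘ₗ D i := by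
  induction rs with
  | nil => intro N _ _ _; exact ⟨fun h => absurd h (lt_irrefl 0), fun i h => absurd h (by simp)⟩
  | cons f rs ih =>
    intro N _ _ hN
    rw [RingTheory.Sequence.isWeaklyRegular_cons_iff] at hN
    obtain ⟨hreg, hN'⟩ := hN
    have ih' := ih (fun g hg => hf g (List.mem_cons_of_mem f hg)) _ hN'
    have hf0 := hf f List.mem_cons_self
    have hdiv : ∀ {i : ℕ} (ψ : F i →ₗ[R] N),
        (∀ x, (Submodule.mkQ (f • (⊤ : Submodule R N))) (ψ x) = 0) →
        ∃ θ : F i →ₗ[R] N, ∀ x, ψ x = f • θ x := by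
      intro i ψ h
      obtain ⟨θ, hθ⟩ := exists_lift (f • LinearMap.id : N →ₗ[R] N) ψ (fun x => by
        have := h x
        rw [Submodule.mkQ_apply, Submodule.Quotient.mk_eq_zero,
          Submodule.mem_smul_pointwise_iff_exists] at this
        obtain ⟨y, -, hy⟩ := this
        exact ⟨y, hy⟩)
      exact ⟨θ, fun x => (hθ x).symm⟩
    constructor
    · intro _ φ hφ
      ext x
      apply hreg
      obtain ⟨y, hy⟩ := hf0 x
      simp only [LinearMap.zero_apply, smul_zero]
      rw [← map_smul, ← hy, hφ]
    · intro i hi φ hφ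
      obtain ⟨h, hh⟩ := exists_homotopy D hD f hf0 i
      obtain ⟨h', hh'⟩ := exists_next D hD f i h hh
      have key : ∀ x, φ (h (D i x)) = f • φ x := by
        intro x
        have := hφ (h' x)
        rw [hh', map_sub, map_smul, sub_eq_zero] at this
        exact this.symm
      have hker : ∀ x, (Submodule.mkQ (f • (⊤ : Submodule R N))) (φ (h (D i x))) = 0 := by
        intro x
        rw [key, Submodule.mkQ_apply, Submodule.Quotient.mk_eq_zero]
        exact Submodule.smul_mem_pointwise_smul _ _ _ trivial
      have hlen : i < rs.length := by simpa using hi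
      cases i with
      | zero =>
        have h0 := ih'.1 hlen (Submodule.mkQ (f • (⊤ : Submodule R N)) ∘ₗ φ ∘ₗ h) hker
        obtain ⟨θ, hθ⟩ := hdiv (φ ∘ₗ h) (fun x => LinearMap.congr_fun h0 x)
        refine ⟨θ, ?_⟩
        ext x
        apply hreg
        exact (key x).symm.trans (hθ _)
      | succ j =>
        obtain ⟨χ', hχ'⟩ := ih'.2 j hlen (Submodule.mkQ (f • (⊤ : Submodule R N)) ∘ₗ φ ∘ₗ h) hker
        obtain ⟨χ, hχ⟩ := exists_lift (Submodule.mkQ (f • (⊤ : Submodule R N))) χ'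
          (fun x => by rw [Submodule.range_mkQ]; trivial)
        obtain ⟨θ, hθ⟩ := hdiv (φ ∘ₗ h - χ ∘ₗ D j) (fun x => by
          rw [LinearMap.sub_apply, map_sub, LinearMap.comp_apply χ, hχ, sub_eq_zero]
          exact LinearMap.congr_fun hχ' x)
        refine ⟨θ, ?_⟩
        ext x
        apply hreg
        have h1 := hθ (D (j + 1) x)
        rw [LinearMap.sub_apply, LinearMap.comp_apply χ, DD D hD, map_zero, sub_zero,
          LinearMap.comp_apply, key] at h1
        exact h1

end dual

end DualComplex

/-! ### Gradings on cokernels -/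

section GradedCokernel

open scoped TensorProduct

variable {m : ℕ}

lemma hpiece_mul {a b : PolyS m} {e : ℤ} {k : ℕ} (ha : a ∈ hpiece m e) (hb : b.IsHomogeneous k) :
    a * b ∈ hpiece m (e + k) := by
  unfold hpiece at *
  split_ifs at ha with h
  · rw [if_pos (by omega), show (e + k).toNat = e.toNat + k by omega]
    exact IsHomogeneous.mul ha hb
  · rw [Submodule.mem_bot] at ha
    rw [ha, zero_mul]; exact zero_mem _

/-- The projection of a polynomial to its part of degree `e`, zero for `e < 0`. -/
def hcomp (m : ℕ) (e : ℤ) : PolyS m →ₗ[ℂ] PolyS m :=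
  if 0 ≤ e then homogeneousComponent e.toNat else 0

lemma hcomp_mem (e : ℤ) (p : PolyS m) : hcomp m e p ∈ hpiece m e := by
  unfold hcomp hpiece
  split_ifs
  · exact homogeneousComponent_mem _ _
  · exact zero_mem _

lemma hcomp_of_mem {e e' : ℤ} {p : PolyS m} (hp : p ∈ hpiece m e) :
    hcomp m e' p = if e' = e then p else 0 := by
  unfold hcomp
  unfold hpiece at hp
  split_ifs at hp with h
  · by_cases h' : 0 ≤ e'
    · rw [if_pos h', homogeneousComponent_of_mem hp]
      by_cases h2 : e' = e
      · rw [if_pos h2, if_pos (by rw [h2])]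
      · rw [if_neg h2, if_neg (by omega)]
    · rw [if_neg h', if_neg (by omega)]; rfl
  · rw [Submodule.mem_bot] at hp
    simp [hp]

lemma sum_mem_of_pieces {A : Type*} [AddCommGroup A] (f : PolyS m →+ A) (Q : AddSubmonoid A)
    (h : ∀ (k : ℕ) (p : PolyS m), p.IsHomogeneous k → f p ∈ Q) (p : PolyS m) : f p ∈ Q := by
  rw [← sum_homogeneousComponent p, map_sum]
  exact sum_mem fun k _ => h k _ (homogeneousComponent_isHomogeneous k p)

lemma mem_hpiece_nat {k : ℕ} {p : PolyS m} (hp : p.IsHomogeneous k) : p ∈ hpiece m k := by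
  rw [hpiece, if_pos (by omega)]; exact hp

lemma hcomp_mul (e : ℤ) (k : ℕ) (a b : PolyS m) (hb : b.IsHomogeneous k) :
    hcomp m (e + k) (a * b) = hcomp m e a * b := by
  have : (hcomp m (e + k) ∘ₗ LinearMap.mulRight ℂ b) a - (LinearMap.mulRight ℂ b ∘ₗ hcomp m e) a = 0 := by
    refine sum_mem_of_pieces
      ((hcomp m (e + k) ∘ₗ LinearMap.mulRight ℂ b) - (LinearMap.mulRight ℂ b ∘ₗ hcomp m e)).toAddMonoidHom
      ⊥ ?_ a
    intro l p hp
    change hcomp m (e + k) (p * b) - hcomp m e p * b = 0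
    rw [hcomp_of_mem (hpiece_mul (mem_hpiece_nat hp) hb), hcomp_of_mem (mem_hpiece_nat hp)]
    by_cases h : e = l
    · simp [h]
    · rw [if_neg h, if_neg (by omega)]; simp
  exact sub_eq_zero.mp this

section vec

variable {N N' : ℕ}

/-- The vectors whose entries are all of degree `e`. -/
def vpiece (m N : ℕ) (e : ℤ) : Submodule ℂ (Fin N → PolyS m) :=
  Submodule.pi Set.univ fun _ => hpiece m e

lemma mem_vpiece {e : ℤ} {v : Fin N → PolyS m} : v ∈ vpiece m N e ↔ ∀ s, v s ∈ hpiece m e := by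
  simp [vpiece]

/-- The projection of a vector to its part of degree `e`. -/
def vcomp (m N : ℕ) (e : ℤ) : (Fin N → PolyS m) →ₗ[ℂ] (Fin N → PolyS m) :=
  LinearMap.pi fun s => hcomp m e ∘ₗ LinearMap.proj s

lemma vcomp_apply (e : ℤ) (v : Fin N → PolyS m) (s) : vcomp m N e v s = hcomp m e (v s) := rfl

lemma lin_apply (D : (Fin N' → PolyS m) →ₗ[PolyS m] (Fin N → PolyS m)) (v) (t) :
    D v t = ∑ s, v s * D (Pi.single s 1) t := by
  conv_lhs => rw [← Finset.univ_sum_single v]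
  rw [map_sum, Finset.sum_apply]
  refine Finset.sum_congr rfl fun s _ => ?_
  have : (Pi.single s (v s) : Fin N' → PolyS m) = v s • Pi.single s 1 := by
    rw [← Pi.single_smul, smul_eq_mul, mul_one]
  rw [this, map_smul]; rfl

lemma lin_vpiece {D : (Fin N' → PolyS m) →ₗ[PolyS m] (Fin N → PolyS m)} {k : ℕ}
    (hD : ∀ s t, (D (Pi.single s 1) t).IsHomogeneous k) {e : ℤ} {v} (hv : v ∈ vpiece m N' e) :
    D v ∈ vpiece m N (e + k) := by
  rw [mem_vpiece] at *
  intro t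
  rw [lin_apply]
  exact sum_mem fun s _ => hpiece_mul (hv s) (hD s t)

lemma lin_vcomp {D : (Fin N' → PolyS m) →ₗ[PolyS m] (Fin N → PolyS m)} {k : ℕ}
    (hD : ∀ s t, (D (Pi.single s 1) t).IsHomogeneous k) (e : ℤ) (v) :
    vcomp m N (e + k) (D v) = D (vcomp m N' e v) := by
  ext1 t
  rw [vcomp_apply, lin_apply, lin_apply, map_sum]
  exact Finset.sum_congr rfl fun s _ => hcomp_mul _ _ _ _ (hD s t)

end vec

/-- A family of spanning subspaces is a direct sum decomposition if it has projections. -/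
lemma isInternal_of_proj {M : Type} [AddCommGroup M] [Module ℂ M] (piece : ℤ → Submodule ℂ M)
    (π : ℤ → M →ₗ[ℂ] M) (h : ∀ i j x, x ∈ piece j → π i x = if i = j then x else 0)
    (hs : ∀ x, x ∈ ⨆ j, piece j) : DirectSum.IsInternal piece := by
  have key : ∀ (x : ⨁ j, piece j) (i : ℤ), π i (DirectSum.coeAddMonoidHom piece x) = x i := by
    intro x i
    induction x using DirectSum.induction_on with
    | zero => simp
    | of j y =>
      rw [DirectSum.coeAddMonoidHom_of, h i j _ y.2]
      split_ifs with hij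
      · subst hij; simp
      · rw [DirectSum.of_eq_of_ne _ _ _ hij]; rfl
    | add a b ha hb => simp only [map_add, ha, hb]; simp
  constructor
  · intro a b hab
    refine DFinsupp.ext fun i => Subtype.ext ?_
    rw [← key a i, ← key b i, hab]
  · intro x
    have := hs x
    induction this using Submodule.iSup_induction' with
    | mem i x hx => exact ⟨DirectSum.of (fun j => piece j) i ⟨x, hx⟩, by simp⟩
    | zero => exact ⟨0, map_zero _⟩
    | add a b _ _ ha hb =>
      obtain ⟨a', rfl⟩ := ha
      obtain ⟨b', rfl⟩ := hb
      exact ⟨a' + b', map_add _ _ _⟩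

section quot

variable {N N' : ℕ} (D : (Fin N' → PolyS m) →ₗ[PolyS m] (Fin N → PolyS m)) (k : ℕ)
    (hD : ∀ s t, (D (Pi.single s 1) t).IsHomogeneous k) (c : ℤ)

/-- The cokernel of a map of free modules. -/
abbrev Cok : Type := (Fin N → PolyS m) ⧸ LinearMap.range D

/-- The projection to the cokernel. -/
def cmk : (Fin N → PolyS m) →ₗ[PolyS m] Cok D := Submodule.mkQ _

/-- The degree `j` part of the cokernel, where the generators of the free module have degree
`c`. -/
def cpiece (j : ℤ) : Submodule ℂ (Cok D) :=
  (vpiece m N (j - c)).map ((cmk D).restrictScalars ℂ)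

include hD in
lemma exists_proj (e : ℤ) : ∃ π : Cok D →ₗ[ℂ] Cok D, ∀ v, π (cmk D v) = cmk D (vcomp m N e v) := by
  refine ⟨((LinearMap.range D).restrictScalars ℂ).liftQ
    ((cmk D).restrictScalars ℂ ∘ₗ vcomp m N e) ?_ ∘ₗ
    (Submodule.Quotient.restrictScalarsEquiv ℂ (LinearMap.range D)).symm.toLinearMap, fun v => rfl⟩
  rintro _ ⟨r, rfl⟩
  rw [LinearMap.mem_ker, LinearMap.comp_apply]
  have := lin_vcomp hD (e - k) r
  rw [sub_add_cancel] at this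
  rw [this]
  exact (Submodule.Quotient.mk_eq_zero _).mpr ⟨_, rfl⟩

include hD in
lemma cpiece_internal : DirectSum.IsInternal (cpiece D c) := by
  choose π hπ using exists_proj D k hD
  refine isInternal_of_proj _ (fun i => π (i - c)) ?_ ?_
  · rintro i j _ ⟨v, hv, rfl⟩
    rw [SetLike.mem_coe, mem_vpiece] at hv
    change π (i - c) (cmk D v) = if i = j then cmk D v else 0
    rw [hπ]
    have : vcomp m N (i - c) v = if i = j then v else 0 := by
      ext1 s
      rw [vcomp_apply, hcomp_of_mem (hv s)]
      by_cases h : i = j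
      · simp [h]
      · rw [if_neg h, if_neg (by omega)]; rfl
    rw [this]; split_ifs <;> simp
  · intro x
    obtain ⟨v, rfl⟩ := Submodule.mkQ_surjective _ x
    rw [← Finset.univ_sum_single v, map_sum]
    refine sum_mem fun s _ => ?_
    refine sum_mem_of_pieces ((cmk D).toAddMonoidHom.comp
      (AddMonoidHom.single (fun _ : Fin N => PolyS m) s)) (⨆ j, cpiece D c j).toAddSubmonoid ?_ (v s)
    intro k p hp
    refine Submodule.mem_iSup_of_mem (c + k) ⟨Pi.single s p, ?_, rfl⟩
    rw [SetLike.mem_coe, mem_vpiece]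
    intro t
    rw [add_sub_cancel_left]
    by_cases h : t = s
    · subst h; rw [Pi.single_eq_same]; exact mem_hpiece_nat hp
    · rw [Pi.single_eq_of_ne h]; exact zero_mem _

/-- The grading of the cokernel of a matrix of forms of degree `k`, with generators in degree `c`. -/
def cgrad : GradedSMod m (Cok D) where
  piece := cpiece D c
  internal := cpiece_internal D k hD c
  smul_mem := by
    rintro d p hp j _ ⟨v, hv, rfl⟩
    refine ⟨p • v, ?_, (cmk D).map_smul p v⟩
    rw [SetLike.mem_coe, mem_vpiece] at hv ⊢
    intro s
    have := hpiece_mul (hv s) hp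
    rw [Pi.smul_apply, smul_eq_mul, mul_comm, show (d : ℤ) + j - c = j - c + d by ring]
    exact this

end quot

end GradedCokernel

/-! ### Pure resolutions and the regular sequence of powers -/

section PureResolution

open scoped TensorProduct

variable {m : ℕ}

section single

/-- The graded Betti numbers of a free module of rank `N` generated in degree `c`. -/
def btab (c : ℤ) (N : ℕ) (j : ℤ) : ℕ := if j = c then N else 0

lemma btab_self (c : ℤ) (N : ℕ) : btab c N c = N := if_pos rfl

lemma btab_ne {c : ℤ} (N : ℕ) {j : ℤ} (h : j ≠ c) : btab c N j = 0 := if_neg h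

/-- A free module generated in a single degree `c`, as a space of vectors. -/
def freeEquiv (m : ℕ) (c : ℤ) (N : ℕ) : FreeMod m (btab c N) ≃ₗ[PolyS m] (Fin N → PolyS m) where
  toFun x s := x c (Fin.cast (btab_self c N).symm s)
  map_add' x y := rfl
  map_smul' a x := rfl
  invFun v := DirectSum.lof (PolyS m) ℤ (fun j : ℤ => Fin (btab c N j) → PolyS m) c
    (fun i => v (Fin.cast (btab_self c N) i))
  left_inv x := by
    refine DFinsupp.ext fun j => ?_
    by_cases h : j = c
    · subst h
      exact DirectSum.lof_apply _ _ _
    · have : IsEmpty (Fin (btab c N j)) := by rw [btab_ne N h]; infer_instance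
      exact Subsingleton.elim _ _
  right_inv v := by
    ext1 s
    exact congrFun (DirectSum.lof_apply (R := PolyS m)
      (M := fun j : ℤ => Fin (btab c N j) → PolyS m) c
      (fun i => v (Fin.cast (btab_self c N) i))) (Fin.cast (btab_self c N).symm s)

lemma mem_freePiece (c : ℤ) (N : ℕ) (e : ℤ) (x : FreeMod m (btab c N)) :
    x ∈ freePiece m (btab c N) e ↔ freeEquiv m c N x ∈ vpiece m N (e - c) := by
  rw [mem_vpiece]
  constructor
  · intro h s
    exact h c _
  · intro h j i
    by_cases hj : j = c
    · subst hj
      have := h (Fin.cast (btab_self j N) i)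
      exact this
    · exact (Fin.cast (btab_ne N hj) i).elim0

end single

lemma hom_mem_mIdeal {p : PolyS m} {e : ℕ} (he : 0 < e) (hp : p.IsHomogeneous e) : p ∈ mIdeal m := by
  rw [mIdeal, ← Set.image_univ, mem_ideal_span_X_image]
  intro a ha
  have h1 : a.degree = e := by
    rw [Finsupp.degree_eq_weight_one]; exact hp (mem_support_iff.mp ha)
  by_contra! h
  have : a = 0 := by ext i; simpa using h i trivial
  rw [this, map_zero] at h1
  omega

lemma mem_mIdeal_smul {c : ℤ} {N : ℕ} {x : FreeMod m (btab c N)}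
    (h : ∀ s, freeEquiv m c N x s ∈ mIdeal m) :
    x ∈ mIdeal m • (⊤ : Submodule (PolyS m) (FreeMod m (btab c N))) := by
  have : x = ∑ s, freeEquiv m c N x s • (freeEquiv m c N).symm (Pi.single s 1) := by
    apply (freeEquiv m c N).injective
    simp only [map_sum, map_smul, LinearEquiv.apply_symm_apply]
    conv_lhs => rw [← Finset.univ_sum_single (freeEquiv m c N x)]
    refine Finset.sum_congr rfl fun s _ => ?_
    rw [← Pi.single_smul, smul_eq_mul, mul_one]
  rw [this]
  exact sum_mem fun s _ => Submodule.smul_mem_smul (h s) trivial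

section res

variable (β : ℕ → ℕ) (c : ℕ → ℤ) (e : ℕ → ℕ)
  (D : ∀ p, (Fin (β (p + 1)) → PolyS m) →ₗ[PolyS m] (Fin (β p) → PolyS m))

/-- The map `D p`, viewed between free modules generated in the degrees `c (p + 1)` and `c p`. -/
def fdiff (p : ℕ) : FreeMod m (btab (c (p + 1)) (β (p + 1))) →ₗ[PolyS m]
    FreeMod m (btab (c p) (β p)) :=
  (freeEquiv m (c p) (β p)).symm.toLinearMap ∘ₗ D p ∘ₗ
    (freeEquiv m (c (p + 1)) (β (p + 1))).toLinearMap

lemma freeEquiv_fdiff (p : ℕ) (x) : freeEquiv m (c p) (β p) (fdiff β c D p x) =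
    D p (freeEquiv m (c (p + 1)) (β (p + 1)) x) := by simp [fdiff]

lemma ker_aug : LinearMap.ker (cmk (D 0) ∘ₗ (freeEquiv m (c 0) (β 0)).toLinearMap) =
    LinearMap.range (fdiff β c D 0) := by
  ext x
  rw [LinearMap.mem_ker, LinearMap.comp_apply, LinearEquiv.coe_coe]
  refine (Submodule.Quotient.mk_eq_zero _).trans ?_
  constructor
  · rintro ⟨r, hr⟩
    refine ⟨(freeEquiv m _ _).symm r, (freeEquiv m (c 0) (β 0)).injective ?_⟩
    rw [freeEquiv_fdiff, LinearEquiv.apply_symm_apply, hr]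
  · rintro ⟨y, rfl⟩
    rw [freeEquiv_fdiff]
    exact ⟨_, rfl⟩

lemma ker_fdiff (hD : ∀ p, LinearMap.ker (D p) = LinearMap.range (D (p + 1))) (p : ℕ) :
    LinearMap.ker (fdiff β c D p) = LinearMap.range (fdiff β c D (p + 1)) := by
  ext x
  rw [LinearMap.mem_ker, ← (freeEquiv m (c p) (β p)).map_eq_zero_iff, freeEquiv_fdiff,
    ← LinearMap.mem_ker, hD]
  constructor
  · rintro ⟨r, hr⟩
    refine ⟨(freeEquiv m _ _).symm r, (freeEquiv m (c (p + 1)) (β (p + 1))).injective ?_⟩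
    rw [freeEquiv_fdiff, LinearEquiv.apply_symm_apply, hr]
  · rintro ⟨y, rfl⟩
    rw [freeEquiv_fdiff]
    exact ⟨_, rfl⟩

lemma comp_symm_apply {p : ℕ} {φ : FreeMod m (btab (c p) (β p)) →ₗ[PolyS m] PolyS m}
    (h : φ ∘ₗ fdiff β c D p = 0) (x) :
    (φ ∘ₗ (freeEquiv m (c p) (β p)).symm.toLinearMap) (D p x) = 0 := by
  have := LinearMap.congr_fun h ((freeEquiv m (c (p + 1)) (β (p + 1))).symm x)
  simpa [fdiff] using this

/-- Injectivity of the dual of the first map, transported from the `D p` to the `fdiff β c D p`. -/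
lemma ker_dual_zero
    (h : ∀ φ : (Fin (β 0) → PolyS m) →ₗ[PolyS m] PolyS m, (∀ x, φ (D 0 x) = 0) → φ = 0) :
    LinearMap.ker (fdiff β c D 0).dualMap = ⊥ := by
  rw [LinearMap.ker_eq_bot']
  intro φ hφ
  have h1 := h _ (comp_symm_apply β c D hφ)
  refine LinearMap.ext fun x => ?_
  have h2 := LinearMap.congr_fun h1 (freeEquiv m (c 0) (β 0) x)
  simpa using h2

/-- Exactness of the dual complex, transported from the `D p` to the `fdiff β c D p`. -/
lemma ker_dual_succ (hD : ∀ p, LinearMap.ker (D p) = LinearMap.range (D (p + 1))) (i : ℕ)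
    (h : ∀ φ : (Fin (β (i + 1)) → PolyS m) →ₗ[PolyS m] PolyS m,
      (∀ x, φ (D (i + 1) x) = 0) → ∃ ψ : (Fin (β i) → PolyS m) →ₗ[PolyS m] PolyS m,
        φ = ψ ∘ₗ D i) :
    LinearMap.ker (fdiff β c D (i + 1)).dualMap = LinearMap.range (fdiff β c D i).dualMap := by
  refine le_antisymm ?_ ?_
  · intro φ hφ
    obtain ⟨ψ, hψ⟩ := h _ (comp_symm_apply β c D hφ)
    refine ⟨ψ ∘ₗ (freeEquiv m (c i) (β i)).toLinearMap, LinearMap.ext fun x => ?_⟩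
    have h2 := LinearMap.congr_fun hψ (freeEquiv m (c (i + 1)) (β (i + 1)) x)
    simp only [LinearMap.comp_apply, LinearEquiv.coe_coe, LinearEquiv.symm_apply_apply] at h2
    refine Eq.trans ?_ h2.symm
    change ψ (freeEquiv m (c i) (β i) (fdiff β c D i x)) = _
    rw [freeEquiv_fdiff]
  · rintro _ ⟨ψ, rfl⟩
    refine LinearMap.ext fun x => ?_
    change ψ (fdiff β c D i (fdiff β c D (i + 1) x)) = 0
    have : fdiff β c D (i + 1) x ∈ LinearMap.ker (fdiff β c D i) := by
      rw [ker_fdiff β c D hD]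
      exact ⟨_, rfl⟩
    rw [LinearMap.mem_ker.mp this, map_zero]

/-- The graded module presented by the matrix `D 0` of forms of degree `e 0`. -/
def modB (hom : ∀ s t, (D 0 (Pi.single s 1) t).IsHomogeneous (e 0)) : GradedModuleBundle m where
  carrier := Cok (D 0)
  grading := cgrad (D 0) (e 0) hom (c 0)

/-- The pure minimal resolution given by an exact sequence of free modules whose `p`-th map is a
matrix of forms of positive degree `e p`.  Zero modules may carry arbitrary degrees `c p`. -/
def resB (he : ∀ p, 0 < e p) (hc : ∀ p, β (p + 1) ≠ 0 → c (p + 1) = c p + e p)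
    (hD : ∀ p, LinearMap.ker (D p) = LinearMap.range (D (p + 1)))
    (hom : ∀ p s t, (D p (Pi.single s 1) t).IsHomogeneous (e p)) :
    MinFreeRes m (modB β c e D (hom 0)).carrier (modB β c e D (hom 0)).grading where
  b p := btab (c p) (β p)
  bfin p := (Set.finite_singleton (c p)).subset fun j hj => by
    by_contra h
    exact hj (btab_ne _ h)
  diff := fdiff β c D
  aug := cmk (D 0) ∘ₗ (freeEquiv m (c 0) (β 0)).toLinearMap
  aug_surjective := (Submodule.mkQ_surjective _).comp (freeEquiv m (c 0) (β 0)).surjective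
  exact_aug := ker_aug β c D
  exact := ker_fdiff β c D hD
  graded_diff p deg x hx := by
    rw [mem_freePiece] at *
    rw [freeEquiv_fdiff]
    by_cases h : β (p + 1) = 0
    · have : IsEmpty (Fin (β (p + 1))) := by rw [h]; infer_instance
      rw [Subsingleton.elim (freeEquiv m (c (p + 1)) (β (p + 1)) x) 0, map_zero]
      exact zero_mem _
    · have := lin_vpiece (hom p) hx
      rwa [show deg - c (p + 1) + (e p : ℤ) = deg - c p by rw [hc p h]; ring] at this
  graded_aug deg x hx := by
    rw [mem_freePiece] at hx
    exact ⟨_, hx, rfl⟩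
  minimal p x := by
    apply mem_mIdeal_smul
    intro s
    rw [freeEquiv_fdiff, lin_apply]
    exact sum_mem fun t _ => Ideal.mul_mem_left _ _ (hom_mem_mIdeal (he p) (hom p t s))

/-- `IsCMres` expressed through the maps `D p`. -/
lemma resB_cm {he hc hD hom} {r : ℕ}
    (h0 : 0 < r → ∀ φ : (Fin (β 0) → PolyS m) →ₗ[PolyS m] PolyS m, (∀ x, φ (D 0 x) = 0) → φ = 0)
    (h1 : ∀ i, i + 1 < r → ∀ φ : (Fin (β (i + 1)) → PolyS m) →ₗ[PolyS m] PolyS m,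
      (∀ x, φ (D (i + 1) x) = 0) → ∃ ψ : (Fin (β i) → PolyS m) →ₗ[PolyS m] PolyS m,
        φ = ψ ∘ₗ D i) :
    IsCMres m (resB β c e D he hc hD hom) r :=
  ⟨fun hr => ker_dual_zero β c D (h0 hr), fun i hi => ker_dual_succ β c D hD i (h1 i hi)⟩

end res

/-- Membership in the monomial ideal generated by the `X_j ^ e` with `j < i`. -/
lemma mem_span_pow {m e i : ℕ} (a : PolyS m) :
    a ∈ Ideal.span {p : PolyS m | ∃ j : Fin m, (j : ℕ) < i ∧ p = X j ^ e} ↔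
      ∀ b ∈ a.support, ∃ j : Fin m, (j : ℕ) < i ∧ e ≤ b j := by
  have : {p : PolyS m | ∃ j : Fin m, (j : ℕ) < i ∧ p = X j ^ e} =
      (fun s => monomial s (1 : ℂ)) '' {s | ∃ j : Fin m, (j : ℕ) < i ∧ s = Finsupp.single j e} := by
    ext p
    simp only [Set.mem_ofPred_eq, Set.mem_image, X_pow_eq_monomial]
    constructor
    · rintro ⟨j, h, rfl⟩; exact ⟨_, ⟨j, h, rfl⟩, rfl⟩
    · rintro ⟨_, ⟨j, h, rfl⟩, rfl⟩; exact ⟨j, h, rfl⟩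
  rw [this, mem_ideal_span_monomial_image]
  refine forall₂_congr fun b _ => ?_
  constructor
  · rintro ⟨_, ⟨j, h, rfl⟩, hb⟩
    exact ⟨j, h, by simpa using hb j⟩
  · rintro ⟨j, h, hb⟩
    exact ⟨_, ⟨j, h, rfl⟩, by rwa [Finsupp.single_le_iff]⟩

lemma regular_pow (m e : ℕ) : RingTheory.Sequence.IsWeaklyRegular (PolyS m)
    (List.ofFn fun i : Fin m => (X i : PolyS m) ^ e) := by
  constructor
  intro i hi
  have hi' : i < m := by simpa using hi
  have hI : Ideal.ofList ((List.ofFn fun i : Fin m => (X i : PolyS m) ^ e).take i) =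
      Ideal.span {p : PolyS m | ∃ j : Fin m, (j : ℕ) < i ∧ p = X j ^ e} := by
    unfold Ideal.ofList
    congr 1
    ext p
    simp only [Set.mem_ofPred_eq, List.mem_take_iff_getElem, List.getElem_ofFn, List.length_ofFn]
    constructor
    · rintro ⟨j, hj, rfl⟩; exact ⟨⟨j, by omega⟩, by simp; omega, rfl⟩
    · rintro ⟨j, hj, rfl⟩; exact ⟨j, by omega, rfl⟩
  rw [isSMulRegular_on_quot_iff_lsmul_comap_le]
  intro a ha
  rw [Submodule.mem_comap, LinearMap.lsmul_apply, hI, List.getElem_ofFn, smul_eq_mul,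
    smul_eq_mul, Ideal.mul_top, mul_comm] at ha
  rw [hI, smul_eq_mul, Ideal.mul_top, mem_span_pow]
  rw [mem_span_pow] at ha
  intro b hb
  obtain ⟨j, hj, h⟩ := ha (b + Finsupp.single ⟨i, hi'⟩ e) (by
    rw [mem_support_iff, X_pow_eq_monomial, coeff_mul_monomial, mul_one]
    exact mem_support_iff.mp hb)
  refine ⟨j, hj, ?_⟩
  rw [Finsupp.add_apply, Finsupp.single_apply, if_neg, add_zero] at h
  · exact h
  · rintro rfl; exact lt_irrefl _ hj

end PureResolution

/-! ### Existence of the pure module -/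

/-- **Eisenbud–Schreyer.** For every `n, d ≥ 0` and every `k`, there is a
finitely generated graded Cohen–Macaulay module `M` over `R = ℂ[x_0,…,x_n]` with pure
minimal free resolution of degree sequence `(k, k+1, …, k+n, k+n+1+d)` and with
`β_0(M) = (n+d choose n)` minimal generators. -/
theorem stmt12 (n d : ℕ) (k : ℤ) :
    ∃ (B : GradedModuleBundle (n + 1)) (F : MinFreeRes (n + 1) B.carrier B.grading),
      IsCMres (n + 1) F (n + 1) ∧
      (∀ i, n + 1 < i → F.b i = 0) ∧
      (∀ (i : ℕ) (j : ℤ), F.b i j ≠ 0 ↔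
        (i ≤ n + 1 ∧ j = (if i ≤ n then k + i else k + n + 1 + d))) ∧
      F.b 0 k = (n + d).choose n := by
  have hc : ∀ p : ℕ, bet n d (p + 1) ≠ 0 →
      (if p + 1 ≤ n then k + (p + 1 : ℕ) else k + n + 1 + d : ℤ) =
      (if p ≤ n then k + p else k + n + 1 + d) + (Ops.yd n d p - Ops.yd n d (p + 1) + 1 : ℕ) := by
    intro p hp
    have h : p ≤ n := by
      by_contra h
      exact hp (bet_big d (by omega))
    unfold Ops.yd
    split_ifs <;> omega
  have hR := dual_exact_of_regular (F := fun p => Fin (bet n d p) → PolyS (n + 1)) (DF n d) (DF_exact n d)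
    (List.ofFn fun i : Fin (n + 1) => (X i : PolyS (n + 1)) ^ (d + 1))
    (by
      intro f hf u
      obtain ⟨i, rfl⟩ := (List.mem_ofFn' _ _).mp hf
      exact DF_ann n d i u) _ (regular_pow (n + 1) (d + 1))
  rw [List.length_ofFn] at hR
  refine ⟨_, resB (bet n d) (fun p => if p ≤ n then k + p else k + n + 1 + d)
    (fun p => Ops.yd n d p - Ops.yd n d (p + 1) + 1) (DF n d) (fun p => Nat.succ_pos _) hc
    (DF_exact n d) (DF_hom n d), resB_cm _ _ _ _ hR.1 hR.2, ?_, ?_, ?_⟩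
  · intro i hi
    funext j
    change btab _ (bet n d i) j = 0
    rw [bet_big d hi, btab]
    split_ifs <;> rfl
  · intro i j
    change btab _ (bet n d i) j ≠ 0 ↔ _
    unfold btab
    constructor
    · intro h
      split_ifs at h with h1
      · refine ⟨?_, h1⟩
        by_contra hi
        exact h (bet_big d (by omega))
      · exact absurd rfl h
    · rintro ⟨h1, h2⟩
      rw [if_pos h2]
      exact bet_pos d h1
  · change btab _ (bet n d 0) k = _
    rw [btab, if_pos (by simp), bet_zero]
end
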